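/- arXiv:1707.00970 — 3 statements merged into one kernel-verified Lean document; each statement's English description precedes it below -/
import Mathlib

section
/- Let (g,B_g) be an irreducible finite-dimensional NIS-Lie superalgebra over a field K of characteristic 2 with B_g odd. If there exists a nonzero odd central element x ∈ z(g)_1 with B_g(x, s_g(v)) = 0 for all v ∈ g_1, then (g,B_g) is obtained either as a D_ev-extension or as a D_od-extension of a NIS-Lie superalgebra (a,B_a) of dimension dim(g) − 2 (with B_a odd). -/
/-!
Common definitions: Lie superalgebras in characteristic 2 (encoded by their even
part `g0`, odd part `g1`, bracket components and squaring), NIS forms (even and odd),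
homogeneous derivations, isometries, ideals, irreducibility, and the structure
formulas of the various double extensions.
-/

namespace Char2DoubleExt

section Defs

variable (K : Type) [Field K]
variable (g0 g1 h0 h1 : Type)
variable [AddCommGroup g0] [Module K g0] [AddCommGroup g1] [Module K g1]
variable [AddCommGroup h0] [Module K h0] [AddCommGroup h1] [Module K h1]

/-- A Lie superalgebra over a field of characteristic 2: `g0` is the even part,
`g1` the odd part, `br0` the bracket on `g0`, `br1` the action of `g0` on `g1`
(the mixed bracket, extended symmetrically), `br11` the bracket of two odd
elements, and `sq` the squaring, whose polarization is `br11`. -/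
structure SuperAlg : Type where
  br0 : g0 →ₗ[K] g0 →ₗ[K] g0
  br1 : g0 →ₗ[K] g1 →ₗ[K] g1
  br11 : g1 →ₗ[K] g1 →ₗ[K] g0
  sq : g1 → g0
  sq_smul : ∀ (c : K) (f : g1), sq (c • f) = (c * c) • sq f
  sq_add : ∀ f g : g1, sq (f + g) = sq f + sq g + br11 f g
  br0_self : ∀ x : g0, br0 x x = 0
  br11_comm : ∀ f g : g1, br11 f g = br11 g f
  jacobi0 : ∀ x y z : g0, br0 x (br0 y z) + br0 y (br0 z x) + br0 z (br0 x y) = 0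
  act_br : ∀ (x y : g0) (f : g1), br1 (br0 x y) f = br1 x (br1 y f) + br1 y (br1 x f)
  jacobi_mix : ∀ (x : g0) (f g : g1),
    br0 x (br11 f g) + br11 f (br1 x g) + br11 g (br1 x f) = 0
  sq_br0 : ∀ (f : g1) (x : g0), br0 (sq f) x = br11 f (br1 x f)
  sq_br1 : ∀ f g : g1, br1 (sq f) g = br1 (br11 f g) f

/-- A non-degenerate invariant supersymmetric *even* bilinear form on a Lie
superalgebra in characteristic 2: it pairs `g0` with `g0` (component `B0`) and
`g1` with `g1` (component `B1`); mixed pairings vanish by evenness. -/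
structure EvenNIS (S : SuperAlg K g0 g1) : Type where
  B0 : g0 →ₗ[K] g0 →ₗ[K] K
  B1 : g1 →ₗ[K] g1 →ₗ[K] K
  symm0 : ∀ x y, B0 x y = B0 y x
  symm1 : ∀ f g, B1 f g = B1 g f
  alt1 : ∀ f, B1 f f = 0
  nondeg0 : ∀ x, (∀ y, B0 x y = 0) → x = 0
  nondeg1 : ∀ f, (∀ g, B1 f g = 0) → f = 0
  inv0 : ∀ x y z, B0 (S.br0 x y) z = B0 x (S.br0 y z)
  inv1 : ∀ (x : g0) (f g : g1), B1 (S.br1 x f) g = B0 x (S.br11 f g)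
  inv2 : ∀ (f g : g1) (x : g0), B0 (S.br11 f g) x = B1 f (S.br1 x g)

/-- A non-degenerate invariant supersymmetric *odd* bilinear form: it pairs `g0`
with `g1` (component `Bo`); like-parity pairings vanish by oddness, and
`B(f,f) = 0` for odd `f` is automatic. -/
structure OddNIS (S : SuperAlg K g0 g1) : Type where
  Bo : g0 →ₗ[K] g1 →ₗ[K] K
  nondeg0 : ∀ x, (∀ f, Bo x f = 0) → x = 0
  nondeg1 : ∀ f, (∀ x, Bo x f = 0) → f = 0
  inv0 : ∀ (x y : g0) (f : g1), Bo (S.br0 x y) f = Bo x (S.br1 y f)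
  inv1 : ∀ (x y : g0) (f : g1), Bo y (S.br1 x f) = Bo x (S.br1 y f)
  inv2 : ∀ f g h : g1, Bo (S.br11 f g) h = Bo (S.br11 g h) f

/-- An even derivation of a Lie superalgebra in characteristic 2. -/
structure EvenDer (S : SuperAlg K g0 g1) : Type where
  D0 : g0 →ₗ[K] g0
  D1 : g1 →ₗ[K] g1
  der0 : ∀ x y, D0 (S.br0 x y) = S.br0 (D0 x) y + S.br0 x (D0 y)
  der1 : ∀ x f, D1 (S.br1 x f) = S.br1 (D0 x) f + S.br1 x (D1 f)
  der_sq : ∀ f, D0 (S.sq f) = S.br11 (D1 f) f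

/-- An odd derivation of a Lie superalgebra in characteristic 2. -/
structure OddDer (S : SuperAlg K g0 g1) : Type where
  D0 : g0 →ₗ[K] g1
  D1 : g1 →ₗ[K] g0
  der0 : ∀ x y, D0 (S.br0 x y) = S.br1 x (D0 y) + S.br1 y (D0 x)
  der1 : ∀ x f, D1 (S.br1 x f) = S.br11 (D0 x) f + S.br0 x (D1 f)
  der_sq : ∀ f, D0 (S.sq f) = S.br1 (D1 f) f

/-- An isometry between Lie superalgebras endowed with even NIS forms: an even
linear bijection preserving brackets, squarings and the bilinear forms. -/
structure EvenIsometry (S : SuperAlg K g0 g1) (N : EvenNIS K g0 g1 S)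
    (S' : SuperAlg K h0 h1) (N' : EvenNIS K h0 h1 S') : Type where
  e0 : g0 ≃ₗ[K] h0
  e1 : g1 ≃ₗ[K] h1
  map_br0 : ∀ x y, e0 (S.br0 x y) = S'.br0 (e0 x) (e0 y)
  map_br1 : ∀ x f, e1 (S.br1 x f) = S'.br1 (e0 x) (e1 f)
  map_br11 : ∀ f g, e0 (S.br11 f g) = S'.br11 (e1 f) (e1 g)
  map_sq : ∀ f, e0 (S.sq f) = S'.sq (e1 f)
  map_B0 : ∀ x y, N'.B0 (e0 x) (e0 y) = N.B0 x y
  map_B1 : ∀ f g, N'.B1 (e1 f) (e1 g) = N.B1 f g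

/-- An isometry between Lie superalgebras endowed with odd NIS forms. -/
structure OddIsometry (S : SuperAlg K g0 g1) (N : OddNIS K g0 g1 S)
    (S' : SuperAlg K h0 h1) (N' : OddNIS K h0 h1 S') : Type where
  e0 : g0 ≃ₗ[K] h0
  e1 : g1 ≃ₗ[K] h1
  map_br0 : ∀ x y, e0 (S.br0 x y) = S'.br0 (e0 x) (e0 y)
  map_br1 : ∀ x f, e1 (S.br1 x f) = S'.br1 (e0 x) (e1 f)
  map_br11 : ∀ f g, e0 (S.br11 f g) = S'.br11 (e1 f) (e1 g)
  map_sq : ∀ f, e0 (S.sq f) = S'.sq (e1 f)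
  map_Bo : ∀ x f, N'.Bo (e0 x) (e1 f) = N.Bo x f

/-- A (graded) ideal of a Lie superalgebra in characteristic 2, given by its
even part `I0` and odd part `I1`. -/
def IsIdealPair (S : SuperAlg K g0 g1) (I0 : Submodule K g0) (I1 : Submodule K g1) : Prop :=
  (∀ x ∈ I0, ∀ y, S.br0 x y ∈ I0) ∧ (∀ x ∈ I0, ∀ f, S.br1 x f ∈ I1) ∧
  (∀ f ∈ I1, ∀ x : g0, S.br1 x f ∈ I1) ∧ (∀ f ∈ I1, ∀ g, S.br11 f g ∈ I0) ∧
  (∀ f ∈ I1, S.sq f ∈ I0)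

/-- Irreducibility of a NIS-Lie superalgebra with an even form: it is not the
direct sum of two nonzero mutually orthogonal ideals. -/
def EvenIrreducible (S : SuperAlg K g0 g1) (N : EvenNIS K g0 g1 S) : Prop :=
  ¬ ∃ (I0 J0 : Submodule K g0) (I1 J1 : Submodule K g1),
      IsIdealPair K g0 g1 S I0 I1 ∧ IsIdealPair K g0 g1 S J0 J1 ∧
      (I0 ≠ ⊥ ∨ I1 ≠ ⊥) ∧ (J0 ≠ ⊥ ∨ J1 ≠ ⊥) ∧
      I0 ⊓ J0 = ⊥ ∧ I0 ⊔ J0 = ⊤ ∧ I1 ⊓ J1 = ⊥ ∧ I1 ⊔ J1 = ⊤ ∧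
      (∀ x ∈ I0, ∀ y ∈ J0, N.B0 x y = 0) ∧ (∀ f ∈ I1, ∀ g ∈ J1, N.B1 f g = 0)

/-- Irreducibility of a NIS-Lie superalgebra with an odd form. -/
def OddIrreducible (S : SuperAlg K g0 g1) (N : OddNIS K g0 g1 S) : Prop :=
  ¬ ∃ (I0 J0 : Submodule K g0) (I1 J1 : Submodule K g1),
      IsIdealPair K g0 g1 S I0 I1 ∧ IsIdealPair K g0 g1 S J0 J1 ∧
      (I0 ≠ ⊥ ∨ I1 ≠ ⊥) ∧ (J0 ≠ ⊥ ∨ J1 ≠ ⊥) ∧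
      I0 ⊓ J0 = ⊥ ∧ I0 ⊔ J0 = ⊤ ∧ I1 ⊓ J1 = ⊥ ∧ I1 ⊔ J1 = ⊤ ∧
      (∀ x ∈ I0, ∀ g ∈ J1, N.Bo x g = 0) ∧ (∀ y ∈ J0, ∀ f ∈ I1, N.Bo y f = 0)

/-- An ideal of a Lie superalgebra given as a pair of subsets (closed under the
vector space operations, brackets with arbitrary elements, and the squaring). -/
def IsIdealSet (S : SuperAlg K g0 g1) (I0 : Set g0) (I1 : Set g1) : Prop :=
  ((0 : g0) ∈ I0) ∧ (∀ x y, x ∈ I0 → y ∈ I0 → x + y ∈ I0) ∧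
  (∀ (c : K) x, x ∈ I0 → c • x ∈ I0) ∧
  ((0 : g1) ∈ I1) ∧ (∀ f g, f ∈ I1 → g ∈ I1 → f + g ∈ I1) ∧
  (∀ (c : K) f, f ∈ I1 → c • f ∈ I1) ∧
  (∀ x ∈ I0, ∀ y, S.br0 x y ∈ I0) ∧ (∀ x ∈ I0, ∀ f, S.br1 x f ∈ I1) ∧
  (∀ f ∈ I1, ∀ x : g0, S.br1 x f ∈ I1) ∧ (∀ f ∈ I1, ∀ g, S.br11 f g ∈ I0) ∧
  (∀ f ∈ I1, S.sq f ∈ I0)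

/-- The even part of the center of a Lie superalgebra. -/
def zEven (S : SuperAlg K g0 g1) : Submodule K g0 :=
  (⨅ y : g0, LinearMap.ker (S.br0.flip y)) ⊓ (⨅ f : g1, LinearMap.ker (S.br1.flip f))

/-- The odd part of the center of a Lie superalgebra. -/
def zOdd (S : SuperAlg K g0 g1) : Submodule K g1 :=
  (⨅ x : g0, LinearMap.ker (S.br1 x)) ⊓ (⨅ g : g1, LinearMap.ker (S.br11.flip g))

/-- The compatibility conditions between an even NIS `N`, an even derivation `D`
and a quadratic form `al` on the odd part, entering the `D_ev`-extension (even
form case): `B(Du,v)+B(u,Dv)=0`, `B(Du,u)=0` for even `u`, `al` is quadratic and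
its polar form is `B(·,D·)`. -/
def DevDataEven (S : SuperAlg K g0 g1) (N : EvenNIS K g0 g1 S)
    (D : EvenDer K g0 g1 S) (al : g1 → K) : Prop :=
  (∀ x y : g0, N.B0 (D.D0 x) y + N.B0 x (D.D0 y) = 0) ∧
  (∀ f g : g1, N.B1 (D.D1 f) g + N.B1 f (D.D1 g) = 0) ∧
  (∀ x : g0, N.B0 (D.D0 x) x = 0) ∧
  (∀ (c : K) (f : g1), al (c • f) = c * c * al f) ∧
  (∀ f g : g1, N.B1 f (D.D1 g) = al (f + g) - al f - al g)

/-- The structure constants of the `D_ev`-extension `g = Kx ⊕ a ⊕ Kx*` (even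
form, even `x`, `x*`); an element of the even part is written `(r, u, s)` for
`r x + u + s x*`, and the constant `c` is the (arbitrary) value `B_g(x*,x*)`. -/
def DevExtEvenFormulas (S : SuperAlg K g0 g1) (N : EvenNIS K g0 g1 S)
    (D : EvenDer K g0 g1 S) (al : g1 → K) (c : K)
    (T : SuperAlg K (K × g0 × K) g1) (M : EvenNIS K (K × g0 × K) g1 T) : Prop :=
  (∀ (r s r' s' : K) (u u' : g0),
      T.br0 (r, u, s) (r', u', s')
        = (N.B0 (D.D0 u) u', S.br0 u u' + s • D.D0 u' + s' • D.D0 u, 0)) ∧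
  (∀ (r s : K) (u : g0) (f : g1), T.br1 (r, u, s) f = S.br1 u f + s • D.D1 f) ∧
  (∀ f : g1, T.sq f = (al f, S.sq f, 0)) ∧
  (∀ (r s r' s' : K) (u u' : g0),
      M.B0 (r, u, s) (r', u', s') = N.B0 u u' + r * s' + r' * s + c * (s * s')) ∧
  (∀ f g : g1, M.B1 f g = N.B1 f g)

/-- The compatibility conditions between an even NIS `N`, an odd derivation `D`
and an even element `w = a₀`, entering the `D_od`-extension (even form case):
`B(Du,v) = B(u,Dv)`, `D² = ad_w`, `D(w) = 0`. -/
def DodDataEven (S : SuperAlg K g0 g1) (N : EvenNIS K g0 g1 S)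
    (D : OddDer K g0 g1 S) (w : g0) : Prop :=
  (∀ (x : g0) (f : g1), N.B1 (D.D0 x) f = N.B0 x (D.D1 f)) ∧
  (∀ x : g0, D.D1 (D.D0 x) = S.br0 w x) ∧
  (∀ f : g1, D.D0 (D.D1 f) = S.br1 w f) ∧
  D.D0 w = 0

/-- The structure constants of the `D_od`-extension `g = Kx ⊕ a ⊕ Kx*` (even
form, odd `x`, `x*`); an element of the odd part is written `(r, u, t)` for
`r x + u + t x*`. -/
def DodExtEvenFormulas (S : SuperAlg K g0 g1) (N : EvenNIS K g0 g1 S)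
    (D : OddDer K g0 g1 S) (w : g0)
    (T : SuperAlg K g0 (K × g1 × K)) (M : EvenNIS K g0 (K × g1 × K) T) : Prop :=
  (∀ x y : g0, T.br0 x y = S.br0 x y) ∧
  (∀ (x : g0) (r t : K) (u : g1),
      T.br1 x (r, u, t) = (N.B1 (D.D0 x) u, S.br1 x u + t • D.D0 x, 0)) ∧
  (∀ (r t : K) (u : g1), T.sq (r, u, t) = S.sq u + (t * t) • w + t • D.D1 u) ∧
  (∀ x y : g0, M.B0 x y = N.B0 x y) ∧
  (∀ (r t r' t' : K) (u u' : g1),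
      M.B1 (r, u, t) (r', u', t') = N.B1 u u' + r * t' + r' * t)

/-- The compatibility conditions between an odd NIS `No`, an odd derivation `D`,
an even element `w = a₀` and a quadratic form `al`, entering the
`D_od`-extension (odd form case). -/
def DodDataOdd (S : SuperAlg K g0 g1) (No : OddNIS K g0 g1 S)
    (D : OddDer K g0 g1 S) (w : g0) (al : g1 → K) : Prop :=
  (∀ x y : g0, No.Bo y (D.D0 x) + No.Bo x (D.D0 y) = 0) ∧
  (∀ f g : g1, No.Bo (D.D1 f) g + No.Bo (D.D1 g) f = 0) ∧
  (∀ x : g0, No.Bo x (D.D0 x) = 0) ∧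
  (∀ x : g0, D.D1 (D.D0 x) = S.br0 w x) ∧
  (∀ f : g1, D.D0 (D.D1 f) = S.br1 w f) ∧
  D.D0 w = 0 ∧
  (∀ (c : K) (f : g1), al (c • f) = c * c * al f) ∧
  (∀ f g : g1, al (f + g) - al f - al g = No.Bo (D.D1 f) g)

/-- The structure constants of the `D_od`-extension `g = Kx ⊕ a ⊕ Ke` (odd form,
even `x`, odd `e`); an even element is written `(r, u)` for `r x + u`, an odd
element `(v, μ)` for `v + μ e`. -/
def DodExtOddFormulas (S : SuperAlg K g0 g1) (No : OddNIS K g0 g1 S)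
    (D : OddDer K g0 g1 S) (w : g0) (al : g1 → K) (m : K)
    (T : SuperAlg K (K × g0) (g1 × K)) (M : OddNIS K (K × g0) (g1 × K) T) : Prop :=
  (∀ (r r' : K) (x y : g0), T.br0 (r, x) (r', y) = (No.Bo y (D.D0 x), S.br0 x y)) ∧
  (∀ (r μ : K) (x : g0) (v : g1), T.br1 (r, x) (v, μ) = (S.br1 x v + μ • D.D0 x, 0)) ∧
  (∀ (μ : K) (v : g1),
      T.sq (v, μ) = (μ * μ * m + al v, S.sq v + (μ * μ) • w + μ • D.D1 v)) ∧
  (∀ (r μ : K) (x : g0) (v : g1), M.Bo (r, x) (v, μ) = No.Bo x v + r * μ)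

/-- The compatibility condition between an odd NIS `No` and an even derivation
`D`, entering the `D_ev`-extension (odd form case): `B(Du,v)+B(u,Dv)=0`. -/
def DevDataOdd (S : SuperAlg K g0 g1) (No : OddNIS K g0 g1 S)
    (D : EvenDer K g0 g1 S) : Prop :=
  ∀ (x : g0) (v : g1), No.Bo (D.D0 x) v + No.Bo x (D.D1 v) = 0

/-- The structure constants of the `D_ev`-extension `g = Kx ⊕ a ⊕ Ke` (odd form,
odd `x`, even `e`); an even element is written `(u, ν)` for `u + ν e`, an odd
element `(μ, v)` for `μ x + v`. -/
def DevExtOddFormulas (S : SuperAlg K g0 g1) (No : OddNIS K g0 g1 S)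
    (D : EvenDer K g0 g1 S)
    (T : SuperAlg K (g0 × K) (K × g1)) (M : OddNIS K (g0 × K) (K × g1) T) : Prop :=
  (∀ (ν ν' : K) (x y : g0),
      T.br0 (x, ν) (y, ν') = (S.br0 x y + ν • D.D0 y + ν' • D.D0 x, 0)) ∧
  (∀ (ν μ : K) (x : g0) (v : g1),
      T.br1 (x, ν) (μ, v) = (No.Bo (D.D0 x) v, S.br1 x v + ν • D.D1 v)) ∧
  (∀ (μ : K) (v : g1), T.sq (μ, v) = (S.sq v, 0)) ∧
  (∀ (ν μ : K) (x : g0) (v : g1), M.Bo (x, ν) (μ, v) = No.Bo x v + ν * μ)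

end Defs

end Char2DoubleExt

namespace Char2DoubleExt

/-!
Choose an even `a` and an odd `b` with `B(a, b) = 1` and project onto their orthogonal complement
along `Ka ⊕ Kb`. If the projection changes brackets and squares by central elements only, the
projected operations form a Lie superalgebra on the complement, the form restricts to it, and the
correction terms are read off from the inner derivations of `a` and `b` by invariance. There are two
such situations. When `b` is central and orthogonal to all squares, its orthogonal complement is
stable and only the `b`-components have to be projected away. When `a` is central, only the
`a`-components do. For the given element `x`, the first applies to `b = x` and yields a
`D_ev`-extension if `s(x) = 0`; otherwise `s(x)` is a nonzero even central element, and the second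
applies to `a = s(x)` and yields a `D_od`-extension.
-/

section KernelProjection

variable {K V : Type*} [Field K] [AddCommGroup V] [Module K V]

lemma isCompl_span_singleton_ker {φ : V →ₗ[K] K} {v : V} (h : φ v ≠ 0) :
    IsCompl (Submodule.span K {v}) (LinearMap.ker φ) :=
  ⟨(Submodule.disjoint_span_singleton_of_notMem h).symm,
    codisjoint_iff.2 (φ.span_singleton_sup_ker_eq_top h)⟩

lemma finrank_ker_add_one [FiniteDimensional K V] {φ : V →ₗ[K] K} {v : V} (h : φ v ≠ 0) :
    Module.finrank K (LinearMap.ker φ) + 1 = Module.finrank K V :=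
  Module.Dual.finrank_ker_add_one_of_ne_zero fun hφ => h (by rw [hφ, LinearMap.zero_apply])

/-- The projection onto the kernel of a linear form `φ` along a vector `v` with `φ v = 1`. -/
def kerProj (φ : V →ₗ[K] K) {v : V} (h : φ v = 1) : V →ₗ[K] LinearMap.ker φ :=
  LinearMap.codRestrict (LinearMap.ker φ) (LinearMap.id - φ.smulRight v) (by simp [h])

lemma smul_add_coe_kerProj (φ : V →ₗ[K] K) {v : V} (h : φ v = 1) (z : V) :
    φ z • v + kerProj φ h z = z :=
  add_sub_cancel _ _

variable (K)

lemma add_self_eq_zero_of_charTwo [CharP K 2] (z : V) : z + z = 0 := by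
  rw [← two_smul K z, CharTwo.two_eq_zero, zero_smul]

lemma neg_eq_self_of_charTwo [CharP K 2] (z : V) : -z = z :=
  neg_eq_of_add_eq_zero_left (add_self_eq_zero_of_charTwo K z)

end KernelProjection

section OddForm

variable {K : Type} [Field K]
variable {g0 g1 : Type} [AddCommGroup g0] [Module K g0] [AddCommGroup g1] [Module K g1]
variable {S : SuperAlg K g0 g1}

lemma mem_zEven_iff {z : g0} :
    z ∈ zEven K g0 g1 S ↔ (∀ y, S.br0 z y = 0) ∧ ∀ f, S.br1 z f = 0 := by
  simp [zEven]

lemma mem_zOdd_iff {f : g1} :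
    f ∈ zOdd K g0 g1 S ↔ (∀ x, S.br1 x f = 0) ∧ ∀ g, S.br11 f g = 0 := by
  simp [zOdd]

namespace SuperAlg

lemma br0_isAlt (S : SuperAlg K g0 g1) : S.br0.IsAlt := S.br0_self

lemma br11_eq_sq_sub (S : SuperAlg K g0 g1) (f g : g1) :
    S.br11 f g = S.sq (f + g) - S.sq f - S.sq g := by
  rw [S.sq_add]
  abel

lemma sq_mem_zEven {f : g1} (hf : f ∈ zOdd K g0 g1 S) : S.sq f ∈ zEven K g0 g1 S := by
  obtain ⟨hf1, hf11⟩ := mem_zOdd_iff.1 hf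
  exact mem_zEven_iff.2 ⟨fun y => by rw [S.sq_br0, hf11], fun g => by rw [S.sq_br1, hf1]⟩

variable [CharP K 2]

lemma br0_comm (S : SuperAlg K g0 g1) (x y : g0) : S.br0 x y = S.br0 y x := by
  rw [← S.br0_isAlt.neg, neg_eq_self_of_charTwo K]

lemma br11_self (S : SuperAlg K g0 g1) (f : g1) : S.br11 f f = 0 := by
  have sq_zero : S.sq 0 = 0 := by simpa using S.sq_smul 0 0
  rw [br11_eq_sq_sub, add_self_eq_zero_of_charTwo K, sq_zero, sub_sub,
    add_self_eq_zero_of_charTwo K, sub_zero]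

/-- The inner derivation `[·, e]` of an even element `e`. -/
def evenAd (S : SuperAlg K g0 g1) (e : g0) : EvenDer K g0 g1 S where
  D0 := S.br0.flip e
  D1 := S.br1 e
  der0 x y := by
    have jacobi := S.jacobi0 e x y
    rw [add_assoc] at jacobi
    simp only [LinearMap.flip_apply]
    rw [S.br0_comm _ e, eq_neg_of_add_eq_zero_left jacobi, neg_eq_self_of_charTwo K,
      S.br0_comm _ y, S.br0_comm x e, S.br0_comm y e, add_comm]
  der1 x f := by
    rw [LinearMap.flip_apply, ← sub_eq_iff_eq_add, sub_eq_add_neg, neg_eq_self_of_charTwo K,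
      S.act_br, add_comm]
  der_sq f := by rw [LinearMap.flip_apply, S.sq_br0, S.br11_comm]

/-- The inner derivation `[e, ·]` of an odd element `e`. -/
def oddAd (S : SuperAlg K g0 g1) (e : g1) : OddDer K g0 g1 S where
  D0 := S.br1.flip e
  D1 := S.br11 e
  der0 x y := S.act_br x y e
  der1 x f := by
    have jacobi := S.jacobi_mix x e f
    rw [add_right_comm] at jacobi
    rw [LinearMap.flip_apply, eq_neg_of_add_eq_zero_right jacobi, neg_eq_self_of_charTwo K,
      S.br11_comm f, add_comm]
  der_sq f := by rw [LinearMap.flip_apply, S.sq_br1, S.br11_comm]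

end SuperAlg

namespace OddNIS

variable (N : OddNIS K g0 g1 S)

lemma exists_Bo_left_eq_one {f : g1} (hf : f ≠ 0) : ∃ x, N.Bo x f = 1 :=
  LinearMap.surjective (f := N.Bo.flip f) (fun h => hf (N.nondeg1 f (DFunLike.congr_fun h))) 1

lemma exists_Bo_right_eq_one {x : g0} (hx : x ≠ 0) : ∃ f, N.Bo x f = 1 :=
  LinearMap.surjective (f := N.Bo x) (fun h => hx (N.nondeg0 x (DFunLike.congr_fun h))) 1

/-- The even elements orthogonal to the odd element `b`. -/
abbrev evenPerp (b : g1) : Submodule K g0 := LinearMap.ker (N.Bo.flip b)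

/-- The odd elements orthogonal to the even element `a`. -/
abbrev oddPerp (a : g0) : Submodule K g1 := LinearMap.ker (N.Bo a)

variable {a : g0} {b : g1}

/-- The even part of the projection onto the orthogonal complement of a hyperbolic pair `a`, `b`,
along `a`. -/
def evenProj (hab : N.Bo a b = 1) : g0 →ₗ[K] N.evenPerp b := kerProj (N.Bo.flip b) hab

/-- The odd part of the projection onto the orthogonal complement of a hyperbolic pair `a`, `b`,
along `b`. -/
def oddProj (hab : N.Bo a b = 1) : g1 →ₗ[K] N.oddPerp a := kerProj (N.Bo a) hab

variable {N}

lemma left_ne_zero_of_Bo_eq_one (hab : N.Bo a b = 1) : a ≠ 0 := by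
  rintro rfl
  simp at hab

lemma right_ne_zero_of_Bo_eq_one (hab : N.Bo a b = 1) : b ≠ 0 := by
  rintro rfl
  simp at hab

lemma isCompl_span_evenPerp (hab : N.Bo a b = 1) : IsCompl (Submodule.span K {a}) (N.evenPerp b) :=
  isCompl_span_singleton_ker (hab.trans_ne one_ne_zero)

lemma isCompl_span_oddPerp (hab : N.Bo a b = 1) : IsCompl (Submodule.span K {b}) (N.oddPerp a) :=
  isCompl_span_singleton_ker (hab.trans_ne one_ne_zero)

lemma finrank_evenPerp_add_one [FiniteDimensional K g0] (hab : N.Bo a b = 1) :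
    Module.finrank K (N.evenPerp b) + 1 = Module.finrank K g0 :=
  finrank_ker_add_one (φ := N.Bo.flip b) (hab.trans_ne one_ne_zero)

lemma finrank_oddPerp_add_one [FiniteDimensional K g1] (hab : N.Bo a b = 1) :
    Module.finrank K (N.oddPerp a) + 1 = Module.finrank K g1 :=
  finrank_ker_add_one (hab.trans_ne one_ne_zero)

section Projection

variable (hab : N.Bo a b = 1)

lemma Bo_smul_add_evenProj (z : g0) : N.Bo z b • a + N.evenProj hab z = z :=
  smul_add_coe_kerProj (N.Bo.flip b) hab z

lemma Bo_smul_add_oddProj (f : g1) : N.Bo a f • b + N.oddProj hab f = f :=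
  smul_add_coe_kerProj (N.Bo a) hab f

lemma coe_evenProj_of_Bo_eq_zero {z : g0} (hz : N.Bo z b = 0) : (N.evenProj hab z : g0) = z := by
  simpa [hz] using Bo_smul_add_evenProj hab z

lemma coe_oddProj_of_Bo_eq_zero {f : g1} (hf : N.Bo a f = 0) : (N.oddProj hab f : g1) = f := by
  simpa [hf] using Bo_smul_add_oddProj hab f

lemma Bo_evenProj (z : g0) (f : N.oddPerp a) : N.Bo (N.evenProj hab z) f = N.Bo z f := by
  have hf : N.Bo a f = 0 := f.2
  simpa [hf] using congr(N.Bo $(Bo_smul_add_evenProj hab z) f)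

lemma Bo_oddProj (u : N.evenPerp b) (f : g1) : N.Bo u (N.oddProj hab f) = N.Bo u f := by
  have hu : N.Bo u b = 0 := u.2
  simpa [hu] using congr(N.Bo u $(Bo_smul_add_oddProj hab f))

section CentralCorrection

variable {z : g0} (hz : N.Bo z b • a ∈ zEven K g0 g1 S)
include hz

lemma br0_evenProj_left (y : g0) : S.br0 (N.evenProj hab z) y = S.br0 z y := by
  conv_rhs => rw [← Bo_smul_add_evenProj hab z, map_add, LinearMap.add_apply,
    (mem_zEven_iff.1 hz).1, zero_add]

lemma br0_evenProj_right (y : g0) : S.br0 y (N.evenProj hab z) = S.br0 y z := by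
  rw [← S.br0_isAlt.neg, br0_evenProj_left hab hz, S.br0_isAlt.neg]

lemma br1_evenProj (f : g1) : S.br1 (N.evenProj hab z) f = S.br1 z f := by
  conv_rhs => rw [← Bo_smul_add_evenProj hab z, map_add, LinearMap.add_apply,
    (mem_zEven_iff.1 hz).2, zero_add]

omit hz
variable {f : g1} (hf : N.Bo a f • b ∈ zOdd K g0 g1 S)
include hf

lemma br1_oddProj (x : g0) : S.br1 x (N.oddProj hab f) = S.br1 x f := by
  conv_rhs => rw [← Bo_smul_add_oddProj hab f, map_add, (mem_zOdd_iff.1 hf).1, zero_add]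

lemma br11_oddProj (g : g1) : S.br11 g (N.oddProj hab f) = S.br11 g f := by
  conv_rhs => rw [← Bo_smul_add_oddProj hab f, map_add, S.br11_comm g, (mem_zOdd_iff.1 hf).2,
    zero_add]

end CentralCorrection

end Projection

variable (N a b)

/-- A hyperbolic pair `a`, `b` such that the projection onto its orthogonal complement changes
brackets and squares by central elements only. This is what makes the projected operations a
Lie superalgebra structure on the complement. -/
structure IsReductionPair : Prop where
  Bo_eq_one : N.Bo a b = 1
  br0_mem : ∀ x y, N.Bo (S.br0 x y) b • a ∈ zEven K g0 g1 S
  sq_mem : ∀ f, N.Bo (S.sq f) b • a ∈ zEven K g0 g1 S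
  br1_mem : ∀ x f, N.Bo a (S.br1 x f) • b ∈ zOdd K g0 g1 S

variable {N a b}

namespace IsReductionPair

lemma br11_mem (h : N.IsReductionPair a b) (f g : g1) :
    N.Bo (S.br11 f g) b • a ∈ zEven K g0 g1 S := by
  simp only [S.br11_eq_sq_sub, map_sub, LinearMap.sub_apply, sub_smul]
  exact sub_mem (sub_mem (h.sq_mem _) (h.sq_mem _)) (h.sq_mem _)

variable (h : N.IsReductionPair a b)

/-- The Lie superalgebra on the orthogonal complement of a reduction pair. -/
def reduction : SuperAlg K (N.evenPerp b) (N.oddPerp a) where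
  br0 := (S.br0.domRestrict₁₂ _ _).compr₂ (N.evenProj h.Bo_eq_one)
  br1 := (S.br1.domRestrict₁₂ _ _).compr₂ (N.oddProj h.Bo_eq_one)
  br11 := (S.br11.domRestrict₁₂ _ _).compr₂ (N.evenProj h.Bo_eq_one)
  sq f := N.evenProj h.Bo_eq_one (S.sq f)
  sq_smul c f := by simp [S.sq_smul]
  sq_add f g := by simp [LinearMap.domRestrict₁₂_apply, S.sq_add]
  br0_self x := by simp [LinearMap.domRestrict₁₂_apply, S.br0_self]
  br11_comm f g := by simp [LinearMap.domRestrict₁₂_apply, S.br11_comm f g]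
  jacobi0 x y z := by
    simp [LinearMap.domRestrict₁₂_apply, br0_evenProj_right, h.br0_mem, ← map_add, S.jacobi0]
  act_br x y f := by
    simp [LinearMap.domRestrict₁₂_apply, br1_evenProj, br1_oddProj, h.br0_mem, h.br1_mem,
      ← map_add, S.act_br]
  jacobi_mix x f g := by
    simp [LinearMap.domRestrict₁₂_apply, br0_evenProj_right, br11_oddProj, h.br11_mem, h.br1_mem,
      ← map_add, S.jacobi_mix]
  sq_br0 f x := by
    simp [LinearMap.domRestrict₁₂_apply, br0_evenProj_left, br11_oddProj, h.sq_mem, h.br1_mem,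
      S.sq_br0]
  sq_br1 f g := by
    simp [LinearMap.domRestrict₁₂_apply, br1_evenProj, h.sq_mem, h.br11_mem, S.sq_br1]

lemma reduction_br0 (u v : N.evenPerp b) :
    h.reduction.br0 u v = N.evenProj h.Bo_eq_one (S.br0 u v) := rfl

lemma reduction_br1 (u : N.evenPerp b) (f : N.oddPerp a) :
    h.reduction.br1 u f = N.oddProj h.Bo_eq_one (S.br1 u f) := rfl

lemma reduction_br11 (f g : N.oddPerp a) :
    h.reduction.br11 f g = N.evenProj h.Bo_eq_one (S.br11 f g) := rfl

lemma reduction_sq (f : N.oddPerp a) :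
    h.reduction.sq f = N.evenProj h.Bo_eq_one (S.sq f) := rfl

/-- The restriction of the odd form to the orthogonal complement of a reduction pair. -/
def form : OddNIS K (N.evenPerp b) (N.oddPerp a) h.reduction where
  Bo := N.Bo.domRestrict₁₂ _ _
  nondeg0 x hx := Subtype.ext <| N.nondeg0 x fun f => by
    simpa [LinearMap.domRestrict₁₂_apply, Bo_oddProj] using hx (N.oddProj h.Bo_eq_one f)
  nondeg1 f hf := Subtype.ext <| N.nondeg1 f fun x => by
    simpa [LinearMap.domRestrict₁₂_apply, Bo_evenProj] using hf (N.evenProj h.Bo_eq_one x)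
  inv0 x y f := by
    simp [LinearMap.domRestrict₁₂_apply, reduction_br0, reduction_br1, Bo_evenProj, Bo_oddProj,
      N.inv0]
  inv1 x y f := by
    simp [LinearMap.domRestrict₁₂_apply, reduction_br1, Bo_oddProj, N.inv1 (x : g0) y f]
  inv2 f g k := by
    simp [LinearMap.domRestrict₁₂_apply, reduction_br11, Bo_evenProj, N.inv2 (f : g1) g k]

lemma form_Bo (u : N.evenPerp b) (f : N.oddPerp a) : h.form.Bo u f = N.Bo u f := rfl

section Derivations

variable [CharP K 2]

/-- The even derivation of the reduction induced by `[·, a]`. -/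
def evenDer : EvenDer K (N.evenPerp b) (N.oddPerp a) h.reduction where
  D0 := (N.evenProj h.Bo_eq_one).comp ((S.evenAd a).D0.domRestrict _)
  D1 := (N.oddProj h.Bo_eq_one).comp ((S.evenAd a).D1.domRestrict _)
  der0 x y := by
    have der : S.br0 (S.br0 x y) a = S.br0 (S.br0 x a) y + S.br0 x (S.br0 y a) :=
      (S.evenAd a).der0 x y
    simp [reduction_br0, SuperAlg.evenAd, br0_evenProj_left, br0_evenProj_right, h.br0_mem, der]
  der1 x f := by
    have der : S.br1 a (S.br1 x f) = S.br1 (S.br0 x a) f + S.br1 x (S.br1 a f) :=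
      (S.evenAd a).der1 x f
    simp [reduction_br1, SuperAlg.evenAd, br1_evenProj, br1_oddProj, h.br0_mem, h.br1_mem, der]
  der_sq f := by
    have der : S.br0 (S.sq f) a = S.br11 f (S.br1 a f) := S.sq_br0 f a
    rw [h.reduction.br11_comm]
    simp [reduction_sq, reduction_br11, SuperAlg.evenAd, br0_evenProj_left, br11_oddProj, h.sq_mem,
      h.br1_mem, der]

/-- The odd derivation of the reduction induced by `[b, ·]`. -/
def oddDer : OddDer K (N.evenPerp b) (N.oddPerp a) h.reduction where
  D0 := (N.oddProj h.Bo_eq_one).comp ((S.oddAd b).D0.domRestrict _)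
  D1 := (N.evenProj h.Bo_eq_one).comp ((S.oddAd b).D1.domRestrict _)
  der0 x y := by
    have der : S.br1 (S.br0 x y) b = S.br1 x (S.br1 y b) + S.br1 y (S.br1 x b) :=
      (S.oddAd b).der0 x y
    simp [reduction_br0, reduction_br1, SuperAlg.oddAd, br1_evenProj, br1_oddProj, h.br0_mem,
      h.br1_mem, der]
  der1 x f := by
    have der : S.br11 b (S.br1 x f) = S.br11 f (S.br1 x b) + S.br0 x (S.br11 b f) :=
      ((S.oddAd b).der1 x f).trans (by rw [S.br11_comm]; rfl)
    rw [h.reduction.br11_comm]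
    simp [reduction_br0, reduction_br1, reduction_br11, SuperAlg.oddAd, br0_evenProj_right,
      br11_oddProj, h.br11_mem, h.br1_mem, der]
  der_sq f := by
    have der : S.br1 (S.sq f) b = S.br1 (S.br11 b f) f := (S.oddAd b).der_sq f
    simp [reduction_sq, reduction_br1, SuperAlg.oddAd, br1_evenProj, h.sq_mem, h.br11_mem, der]

lemma evenDer_D0 (u : N.evenPerp b) :
    h.evenDer.D0 u = N.evenProj h.Bo_eq_one (S.br0 u a) := rfl

lemma evenDer_D1 (f : N.oddPerp a) :
    h.evenDer.D1 f = N.oddProj h.Bo_eq_one (S.br1 a f) := rfl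

lemma oddDer_D0 (u : N.evenPerp b) :
    h.oddDer.D0 u = N.oddProj h.Bo_eq_one (S.br1 u b) := rfl

lemma oddDer_D1 (f : N.oddPerp a) :
    h.oddDer.D1 f = N.evenProj h.Bo_eq_one (S.br11 b f) := rfl

lemma devDataOdd : DevDataOdd K _ _ _ h.form h.evenDer := fun u f => by
  rw [form_Bo, form_Bo, evenDer_D0, evenDer_D1, Bo_evenProj, Bo_oddProj, N.inv0]
  exact CharTwo.add_self_eq_zero _

lemma dodDataOdd : DodDataOdd K _ _ _ h.form h.oddDer (N.evenProj h.Bo_eq_one (S.sq b))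
    (fun f => N.Bo (S.sq f) b) := by
  refine ⟨fun x y => ?_, fun f g => ?_, fun x => ?_, fun x => ?_, fun f => ?_, ?_, fun c f => ?_,
    fun f g => ?_⟩
  · rw [form_Bo, form_Bo, oddDer_D0, oddDer_D0, Bo_oddProj, Bo_oddProj, N.inv1]
    exact CharTwo.add_self_eq_zero _
  · rw [form_Bo, form_Bo, oddDer_D1, oddDer_D1, Bo_evenProj, Bo_evenProj, N.inv2, S.br11_comm,
      ← N.inv2]
    exact CharTwo.add_self_eq_zero _
  · rw [form_Bo, oddDer_D0, Bo_oddProj, ← N.inv0, S.br0_self, map_zero, LinearMap.zero_apply]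
  · rw [oddDer_D1, oddDer_D0, reduction_br0, br11_oddProj _ (h.br1_mem _ _),
      br0_evenProj_left _ (h.sq_mem _), S.sq_br0]
  · rw [oddDer_D0, oddDer_D1, reduction_br1, br1_evenProj _ (h.br11_mem _ _),
      br1_evenProj _ (h.sq_mem _), S.sq_br1]
  · rw [oddDer_D0, br1_evenProj _ (h.sq_mem _), S.sq_br1, S.br11_self, map_zero,
      LinearMap.zero_apply, map_zero]
  · simp only [Submodule.coe_smul, S.sq_smul, map_smul, LinearMap.smul_apply, smul_eq_mul]
  · rw [form_Bo, oddDer_D1, Bo_evenProj, N.inv2, S.br11_eq_sq_sub]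
    simp only [map_sub, LinearMap.sub_apply, Submodule.coe_add]

lemma br0_eq (u v : N.evenPerp b) :
    S.br0 u v = h.form.Bo v (h.oddDer.D0 u) • a + h.reduction.br0 u v := by
  rw [form_Bo, oddDer_D0, Bo_oddProj, ← N.inv0, S.br0_comm v, reduction_br0, Bo_smul_add_evenProj]

lemma br1_eq (u : N.evenPerp b) (f : N.oddPerp a) :
    S.br1 u f = h.form.Bo (h.evenDer.D0 u) f • b + h.reduction.br1 u f := by
  rw [form_Bo, evenDer_D0, Bo_evenProj, S.br0_comm, N.inv0, reduction_br1, Bo_smul_add_oddProj]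

lemma br11_eq (f g : N.oddPerp a) :
    S.br11 f g = h.form.Bo (h.oddDer.D1 f) g • a + h.reduction.br11 f g := by
  rw [form_Bo, oddDer_D1, Bo_evenProj, N.inv2, reduction_br11, Bo_smul_add_evenProj]

end Derivations

end IsReductionPair

lemma Bo_br0_of_mem_zOdd (hb : b ∈ zOdd K g0 g1 S) (x y : g0) : N.Bo (S.br0 x y) b = 0 := by
  rw [N.inv0, (mem_zOdd_iff.1 hb).1, map_zero]

lemma Bo_br11_of_mem_zOdd (hb : b ∈ zOdd K g0 g1 S) (f g : g1) : N.Bo (S.br11 f g) b = 0 := by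
  rw [N.inv2, S.br11_comm, (mem_zOdd_iff.1 hb).2, map_zero, LinearMap.zero_apply]

lemma Bo_br1_of_mem_zEven (ha : a ∈ zEven K g0 g1 S) (x : g0) (f : g1) :
    N.Bo a (S.br1 x f) = 0 := by
  rw [← N.inv0, (mem_zEven_iff.1 ha).1, map_zero, LinearMap.zero_apply]

lemma Bo_br1_self_left (x : g0) (f : g1) : N.Bo x (S.br1 x f) = 0 := by
  rw [← N.inv0, S.br0_self, map_zero, LinearMap.zero_apply]

lemma Bo_br11_self_right [CharP K 2] (f g : g1) : N.Bo (S.br11 f g) f = 0 := by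
  rw [N.inv2, N.inv2, S.br11_self, map_zero, LinearMap.zero_apply]

lemma isReductionPair_of_mem_zOdd (hab : N.Bo a b = 1) (hb : b ∈ zOdd K g0 g1 S)
    (hsq : ∀ f, N.Bo (S.sq f) b = 0) : N.IsReductionPair a b where
  Bo_eq_one := hab
  br0_mem x y := by simp [Bo_br0_of_mem_zOdd hb]
  sq_mem f := by simp [hsq]
  br1_mem _ _ := Submodule.smul_mem _ _ hb

lemma isReductionPair_of_mem_zEven (hab : N.Bo a b = 1) (ha : a ∈ zEven K g0 g1 S) :
    N.IsReductionPair a b where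
  Bo_eq_one := hab
  br0_mem _ _ := Submodule.smul_mem _ _ ha
  sq_mem _ := Submodule.smul_mem _ _ ha
  br1_mem x f := by simp [Bo_br1_of_mem_zEven ha]

variable (N)

/-- `(g, B)` is a `D_ev`-extension: it decomposes as `Kx ⊕ a ⊕ Ke` with `x` odd and `e` even, and
its bracket, squaring and form are the ones built from an even derivation of `a`. -/
def IsDevExtension : Prop :=
  ∃ (x : g1) (e : g0) (A0 : Submodule K g0) (A1 : Submodule K g1)
    (T : SuperAlg K ↥A0 ↥A1) (M : OddNIS K ↥A0 ↥A1 T)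
    (D : EvenDer K ↥A0 ↥A1 T),
    DevDataOdd K ↥A0 ↥A1 T M D ∧
    x ≠ 0 ∧ e ≠ 0 ∧
    Submodule.span K ({e} : Set g0) ⊓ A0 = ⊥ ∧
    Submodule.span K ({e} : Set g0) ⊔ A0 = ⊤ ∧
    Submodule.span K ({x} : Set g1) ⊓ A1 = ⊥ ∧
    Submodule.span K ({x} : Set g1) ⊔ A1 = ⊤ ∧
    Module.finrank K ↥A0 + 1 = Module.finrank K g0 ∧
    Module.finrank K ↥A1 + 1 = Module.finrank K g1 ∧
    (∀ y : g0, S.br1 y x = 0) ∧ (∀ f : g1, S.br11 x f = 0) ∧ S.sq x = 0 ∧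
    (∀ u v : A0, S.br0 ↑u ↑v = T.br0 u v) ∧
    (∀ u : A0, S.br0 ↑u e = ↑(D.D0 u)) ∧
    (∀ (u : A0) (f : A1), S.br1 ↑u ↑f = M.Bo (D.D0 u) f • x + ↑(T.br1 u f)) ∧
    (∀ f : A1, S.br1 e ↑f = ↑(D.D1 f)) ∧
    (∀ f g : A1, S.br11 ↑f ↑g = T.br11 f g) ∧
    (∀ f : A1, S.sq ↑f = T.sq f) ∧
    (∀ (u : A0) (f : A1), N.Bo ↑u ↑f = M.Bo u f) ∧
    N.Bo e x = 1 ∧ (∀ f : A1, N.Bo e ↑f = 0) ∧ (∀ u : A0, N.Bo ↑u x = 0)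

/-- `(g, B)` is a `D_od`-extension: it decomposes as `Kx ⊕ a ⊕ Ke` with `x` even and `e` odd, and
its bracket, squaring and form are the ones built from an odd derivation of `a`, an element `w`
(the `a₀` of the paper), a quadratic form `al` on the odd part of `a` and a scalar `m`. -/
def IsDodExtension : Prop :=
  ∃ (x : g0) (e : g1) (A0 : Submodule K g0) (A1 : Submodule K g1)
    (T : SuperAlg K ↥A0 ↥A1) (M : OddNIS K ↥A0 ↥A1 T)
    (D : OddDer K ↥A0 ↥A1 T) (w : A0) (al : ↥A1 → K) (m : K),
    DodDataOdd K ↥A0 ↥A1 T M D w al ∧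
    x ≠ 0 ∧ e ≠ 0 ∧
    Submodule.span K ({x} : Set g0) ⊓ A0 = ⊥ ∧
    Submodule.span K ({x} : Set g0) ⊔ A0 = ⊤ ∧
    Submodule.span K ({e} : Set g1) ⊓ A1 = ⊥ ∧
    Submodule.span K ({e} : Set g1) ⊔ A1 = ⊤ ∧
    Module.finrank K ↥A0 + 1 = Module.finrank K g0 ∧
    Module.finrank K ↥A1 + 1 = Module.finrank K g1 ∧
    (∀ y : g0, S.br0 x y = 0) ∧ (∀ f : g1, S.br1 x f = 0) ∧
    (∀ u v : A0, S.br0 ↑u ↑v = M.Bo v (D.D0 u) • x + ↑(T.br0 u v)) ∧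
    (∀ (u : A0) (f : A1), S.br1 ↑u ↑f = ↑(T.br1 u f)) ∧
    (∀ u : A0, S.br1 ↑u e = ↑(D.D0 u)) ∧
    (∀ f g : A1, S.br11 ↑f ↑g = M.Bo (D.D1 f) g • x + ↑(T.br11 f g)) ∧
    (∀ f : A1, S.br11 e ↑f = ↑(D.D1 f)) ∧
    (∀ f : A1, S.sq ↑f = al f • x + ↑(T.sq f)) ∧
    S.sq e = m • x + ↑w ∧
    (∀ (u : A0) (f : A1), N.Bo ↑u ↑f = M.Bo u f) ∧
    N.Bo x e = 1 ∧ (∀ f : A1, N.Bo x ↑f = 0) ∧ (∀ u : A0, N.Bo ↑u e = 0)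

variable {N} [CharP K 2] [FiniteDimensional K g0] [FiniteDimensional K g1]

theorem isDevExtension_of_mem_zOdd (hb : b ≠ 0) (hbz : b ∈ zOdd K g0 g1 S) (hb_sq : S.sq b = 0)
    (hsq : ∀ f, N.Bo (S.sq f) b = 0) : N.IsDevExtension := by
  obtain ⟨a, hab⟩ := N.exists_Bo_left_eq_one hb
  have h := isReductionPair_of_mem_zOdd hab hbz hsq
  obtain ⟨hb1, hb11⟩ := mem_zOdd_iff.1 hbz
  have compl_even := isCompl_span_evenPerp hab
  have compl_odd := isCompl_span_oddPerp hab
  exact ⟨b, a, N.evenPerp b, N.oddPerp a, h.reduction, h.form, h.evenDer, h.devDataOdd,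
    hb, left_ne_zero_of_Bo_eq_one hab, compl_even.inf_eq_bot, compl_even.sup_eq_top,
    compl_odd.inf_eq_bot, compl_odd.sup_eq_top, finrank_evenPerp_add_one hab,
    finrank_oddPerp_add_one hab, hb1, hb11, hb_sq,
    fun u v => (coe_evenProj_of_Bo_eq_zero hab (Bo_br0_of_mem_zOdd hbz u v)).symm,
    fun u => (coe_evenProj_of_Bo_eq_zero hab (Bo_br0_of_mem_zOdd hbz u a)).symm,
    h.br1_eq,
    fun f => (coe_oddProj_of_Bo_eq_zero hab (Bo_br1_self_left a (f : g1))).symm,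
    fun f g => (coe_evenProj_of_Bo_eq_zero hab (Bo_br11_of_mem_zOdd hbz f g)).symm,
    fun f => (coe_evenProj_of_Bo_eq_zero hab (hsq f)).symm,
    fun u f => (h.form_Bo u f).symm, hab, fun f => f.2, fun u => u.2⟩

theorem isDodExtension_of_mem_zEven (ha : a ≠ 0) (haz : a ∈ zEven K g0 g1 S) :
    N.IsDodExtension := by
  obtain ⟨b, hab⟩ := N.exists_Bo_right_eq_one ha
  have h := isReductionPair_of_mem_zEven hab haz
  obtain ⟨ha0, ha1⟩ := mem_zEven_iff.1 haz
  have compl_even := isCompl_span_evenPerp hab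
  have compl_odd := isCompl_span_oddPerp hab
  exact ⟨a, b, N.evenPerp b, N.oddPerp a, h.reduction, h.form, h.oddDer,
    N.evenProj hab (S.sq b), fun f => N.Bo (S.sq f) b, N.Bo (S.sq b) b, h.dodDataOdd,
    ha, right_ne_zero_of_Bo_eq_one hab, compl_even.inf_eq_bot, compl_even.sup_eq_top,
    compl_odd.inf_eq_bot, compl_odd.sup_eq_top, finrank_evenPerp_add_one hab,
    finrank_oddPerp_add_one hab, ha0, ha1,
    h.br0_eq,
    fun u f => (coe_oddProj_of_Bo_eq_zero hab (Bo_br1_of_mem_zEven haz u f)).symm,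
    fun u => (coe_oddProj_of_Bo_eq_zero hab (Bo_br1_of_mem_zEven haz u b)).symm,
    h.br11_eq,
    fun f => (coe_evenProj_of_Bo_eq_zero hab (Bo_br11_self_right b f)).symm,
    fun f => (Bo_smul_add_evenProj hab (S.sq f)).symm,
    (Bo_smul_add_evenProj hab (S.sq b)).symm,
    fun u f => (h.form_Bo u f).symm, hab, fun f => f.2, fun u => u.2⟩

end OddNIS

theorem stmt13_general [CharP K 2] [FiniteDimensional K g0] [FiniteDimensional K g1]
    (N : OddNIS K g0 g1 S) {x : g1} (hx : x ≠ 0) (hxz : x ∈ zOdd K g0 g1 S)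
    (hsq : ∀ v, N.Bo (S.sq v) x = 0) : N.IsDevExtension ∨ N.IsDodExtension := by
  by_cases hx_sq : S.sq x = 0
  · exact Or.inl (OddNIS.isDevExtension_of_mem_zOdd hx hxz hx_sq hsq)
  · exact Or.inr (OddNIS.isDodExtension_of_mem_zEven hx_sq (SuperAlg.sq_mem_zEven hxz))

end OddForm

/-- Proposition 4.5 of the paper: an irreducible
finite-dimensional NIS-Lie superalgebra `(g, B_g)` in characteristic 2 with
`B_g` odd, admitting a nonzero odd central element `x` with `B_g(x, s_g(v)) = 0`
for all odd `v`, is obtained either as a `D_ev`-extension (odd `x`, even `e`) or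
as a `D_od`-extension (even `x`, odd `e`) of a NIS-Lie superalgebra with odd
form of dimension `dim g − 2`. -/
theorem stmt13 (K : Type) [Field K] [CharP K 2] (g0 g1 : Type)
    [AddCommGroup g0] [Module K g0] [AddCommGroup g1] [Module K g1]
    [FiniteDimensional K g0] [FiniteDimensional K g1]
    (S : SuperAlg K g0 g1) (No : OddNIS K g0 g1 S)
    (hirr : OddIrreducible K g0 g1 S No)
    (hz : ∃ x : g1, x ≠ 0 ∧ (∀ y : g0, S.br1 y x = 0) ∧ (∀ f : g1, S.br11 x f = 0) ∧
            (∀ v : g1, No.Bo (S.sq v) x = 0)) :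
    -- `g` is a `D_ev`-extension (odd `x`, even `e`) ...
    (∃ (x : g1) (e : g0) (A0 : Submodule K g0) (A1 : Submodule K g1)
      (T : SuperAlg K ↥A0 ↥A1) (M : OddNIS K ↥A0 ↥A1 T)
      (D : EvenDer K ↥A0 ↥A1 T),
      DevDataOdd K ↥A0 ↥A1 T M D ∧
      x ≠ 0 ∧ e ≠ 0 ∧
      Submodule.span K ({e} : Set g0) ⊓ A0 = ⊥ ∧
      Submodule.span K ({e} : Set g0) ⊔ A0 = ⊤ ∧
      Submodule.span K ({x} : Set g1) ⊓ A1 = ⊥ ∧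
      Submodule.span K ({x} : Set g1) ⊔ A1 = ⊤ ∧
      Module.finrank K ↥A0 + 1 = Module.finrank K g0 ∧
      Module.finrank K ↥A1 + 1 = Module.finrank K g1 ∧
      (∀ y : g0, S.br1 y x = 0) ∧ (∀ f : g1, S.br11 x f = 0) ∧ S.sq x = 0 ∧
      (∀ u v : A0, S.br0 ↑u ↑v = T.br0 u v) ∧
      (∀ u : A0, S.br0 ↑u e = ↑(D.D0 u)) ∧
      (∀ (u : A0) (f : A1), S.br1 ↑u ↑f = M.Bo (D.D0 u) f • x + ↑(T.br1 u f)) ∧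
      (∀ f : A1, S.br1 e ↑f = ↑(D.D1 f)) ∧
      (∀ f g : A1, S.br11 ↑f ↑g = T.br11 f g) ∧
      (∀ f : A1, S.sq ↑f = T.sq f) ∧
      (∀ (u : A0) (f : A1), No.Bo ↑u ↑f = M.Bo u f) ∧
      No.Bo e x = 1 ∧ (∀ f : A1, No.Bo e ↑f = 0) ∧ (∀ u : A0, No.Bo ↑u x = 0))
    ∨
    -- ... or a `D_od`-extension (even `x`, odd `e`)
    (∃ (x : g0) (e : g1) (A0 : Submodule K g0) (A1 : Submodule K g1)
      (T : SuperAlg K ↥A0 ↥A1) (M : OddNIS K ↥A0 ↥A1 T)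
      (D : OddDer K ↥A0 ↥A1 T) (w : A0) (al : ↥A1 → K) (m : K),
      DodDataOdd K ↥A0 ↥A1 T M D w al ∧
      x ≠ 0 ∧ e ≠ 0 ∧
      Submodule.span K ({x} : Set g0) ⊓ A0 = ⊥ ∧
      Submodule.span K ({x} : Set g0) ⊔ A0 = ⊤ ∧
      Submodule.span K ({e} : Set g1) ⊓ A1 = ⊥ ∧
      Submodule.span K ({e} : Set g1) ⊔ A1 = ⊤ ∧
      Module.finrank K ↥A0 + 1 = Module.finrank K g0 ∧
      Module.finrank K ↥A1 + 1 = Module.finrank K g1 ∧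
      (∀ y : g0, S.br0 x y = 0) ∧ (∀ f : g1, S.br1 x f = 0) ∧
      (∀ u v : A0, S.br0 ↑u ↑v = M.Bo v (D.D0 u) • x + ↑(T.br0 u v)) ∧
      (∀ (u : A0) (f : A1), S.br1 ↑u ↑f = ↑(T.br1 u f)) ∧
      (∀ u : A0, S.br1 ↑u e = ↑(D.D0 u)) ∧
      (∀ f g : A1, S.br11 ↑f ↑g = M.Bo (D.D1 f) g • x + ↑(T.br11 f g)) ∧
      (∀ f : A1, S.br11 e ↑f = ↑(D.D1 f)) ∧
      (∀ f : A1, S.sq ↑f = al f • x + ↑(T.sq f)) ∧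
      S.sq e = m • x + ↑w ∧
      (∀ (u : A0) (f : A1), No.Bo ↑u ↑f = M.Bo u f) ∧
      No.Bo x e = 1 ∧ (∀ f : A1, No.Bo x ↑f = 0) ∧ (∀ u : A0, No.Bo ↑u e = 0)) := by
  obtain ⟨x, hx, hx1, hx11, hsq⟩ := hz
  exact stmt13_general No hx (mem_zOdd_iff.2 ⟨hx1, hx11⟩) hsq

end Char2DoubleExt
end

section
/- Let (a,B_a) be a NIS-Lie superalgebra over a field K of characteristic 2 with B_a odd, and let D and D' be even derivations each satisfying B_a(D(u),v) + B_a(u,D(v)) = 0 for all u,v ∈ a. If D and D' are cohomologous, i.e. D = λD' + ad_t for some nonzero λ ∈ K and t ∈ a_0, then the D_ev-extensions of (a,B_a) by D and by D' are isometric via an adapted isometry. -/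
/-!
Among the even linear bijections preserving the form, those that preserve the bracket of even
elements and the squaring are automatically isometries: invariance and non-degeneracy of the form
recover the mixed bracket from the even one, and polarization recovers the odd bracket from the
squaring. For the two extensions one takes `e ↦ t + λ e` and the identity on `a_0`; the form
then forces the map on the odd parts to be `x ↦ λ⁻¹ x` and `v ↦ v + λ⁻¹ B_a(t, v) x`.
-/

namespace Char2DoubleExt

section Isometry

variable {K g0 g1 h0 h1 : Type} [Field K]
variable [AddCommGroup g0] [Module K g0] [AddCommGroup g1] [Module K g1]
variable [AddCommGroup h0] [Module K h0] [AddCommGroup h1] [Module K h1]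
variable {S : SuperAlg K g0 g1} {S' : SuperAlg K h0 h1}

theorem SuperAlg.br0_comm_s16 [CharP K 2] (S : SuperAlg K g0 g1) (x y : g0) :
    S.br0 x y = S.br0 y x := by
  have alternating : S.br0.IsAlt := S.br0_self
  rw [← alternating.neg, ← neg_one_smul K, CharTwo.neg_eq, one_smul]

theorem SuperAlg.map_br11_of_map_sq {e0 : g0 →ₗ[K] h0} {e1 : g1 →ₗ[K] h1}
    (map_sq : ∀ f, e0 (S.sq f) = S'.sq (e1 f)) (f g : g1) :
    e0 (S.br11 f g) = S'.br11 (e1 f) (e1 g) := by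
  have sq_sum := map_sq (f + g)
  rw [S.sq_add, map_add, map_add, map_add, S'.sq_add, map_sq, map_sq] at sq_sum
  exact add_left_cancel sq_sum

theorem OddNIS.eq_of_forall_Bo_eq (N : OddNIS K g0 g1 S) {f g : g1}
    (h : ∀ x, N.Bo x f = N.Bo x g) : f = g :=
  sub_eq_zero.mp (N.nondeg1 _ fun x => by rw [map_sub, h, sub_self])

theorem OddNIS.map_br1_of_map_br0 (N : OddNIS K g0 g1 S) (N' : OddNIS K h0 h1 S')
    {e0 : g0 ≃ₗ[K] h0} {e1 : g1 →ₗ[K] h1}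
    (map_br0 : ∀ x y, e0 (S.br0 x y) = S'.br0 (e0 x) (e0 y))
    (map_Bo : ∀ x f, N'.Bo (e0 x) (e1 f) = N.Bo x f) (x : g0) (f : g1) :
    e1 (S.br1 x f) = S'.br1 (e0 x) (e1 f) := by
  refine N'.eq_of_forall_Bo_eq fun z => ?_
  obtain ⟨y, rfl⟩ := e0.surjective z
  calc N'.Bo (e0 y) (e1 (S.br1 x f))
      = N.Bo (S.br0 y x) f := by rw [map_Bo, N.inv0]
    _ = N'.Bo (e0 y) (S'.br1 (e0 x) (e1 f)) := by rw [← map_Bo, map_br0, N'.inv0]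

/-- The isometry of odd forms given by an even linear bijection that preserves the form, the
bracket of even elements and the squaring; the two remaining brackets are then preserved. -/
def OddIsometry.ofMapBr0MapSq {N : OddNIS K g0 g1 S} {N' : OddNIS K h0 h1 S'}
    (e0 : g0 ≃ₗ[K] h0) (e1 : g1 ≃ₗ[K] h1)
    (map_br0 : ∀ x y, e0 (S.br0 x y) = S'.br0 (e0 x) (e0 y))
    (map_sq : ∀ f, e0 (S.sq f) = S'.sq (e1 f))
    (map_Bo : ∀ x f, N'.Bo (e0 x) (e1 f) = N.Bo x f) :
    OddIsometry K g0 g1 h0 h1 S N S' N' where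
  e0 := e0
  e1 := e1
  map_br0 := map_br0
  map_br1 := N.map_br1_of_map_br0 N' (e1 := e1) map_br0 map_Bo
  map_br11 := SuperAlg.map_br11_of_map_sq (e0 := e0.toLinearMap) (e1 := e1.toLinearMap) map_sq
  map_sq := map_sq
  map_Bo := map_Bo

end Isometry

section Shear

variable {R M M₂ M₃ M₄ : Type*} [Semiring R]
variable [AddCommMonoid M] [AddCommMonoid M₂] [AddCommGroup M₃] [AddCommGroup M₄]
variable [Module R M] [Module R M₂] [Module R M₃] [Module R M₄]

/-- The linear equivalence given by an upper triangular block matrix with diagonal blocks `e₁`,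
`e₂` and upper right block `f`; it is `LinearEquiv.skewProd` with the two factors exchanged. -/
def upperSkewProd (e₁ : M₃ ≃ₗ[R] M₄) (e₂ : M ≃ₗ[R] M₂) (f : M →ₗ[R] M₄) :
    (M₃ × M) ≃ₗ[R] M₄ × M₂ :=
  LinearEquiv.prodComm R M₃ M ≪≫ₗ e₂.skewProd e₁ f ≪≫ₗ LinearEquiv.prodComm R M₂ M₄

end Shear

section Cohomologous

variable {K a0 a1 : Type} [Field K]
variable [AddCommGroup a0] [Module K a0] [AddCommGroup a1] [Module K a1]

/-- The even part `u ↦ u`, `e ↦ t + lam e` of the isometry between the `D_ev`-extensions by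
cohomologous derivations. -/
def cohomologousEvenEquiv (lam : K) (hlam : lam ≠ 0) (t : a0) : (a0 × K) ≃ₗ[K] a0 × K :=
  upperSkewProd (.refl K a0) (.smulOfNeZero K K lam hlam) (LinearMap.toSpanSingleton K a0 t)

theorem cohomologousEvenEquiv_mk (lam : K) (hlam : lam ≠ 0) (t x : a0) (ν : K) :
    cohomologousEvenEquiv lam hlam t (x, ν) = (x + ν • t, lam * ν) :=
  rfl

/-- The odd part `x ↦ lam⁻¹ x`, `v ↦ v + lam⁻¹ φ(v) x` of the isometry between the
`D_ev`-extensions by cohomologous derivations, where `φ` stands for `B_a(t, ·)`. -/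
def cohomologousOddEquiv (lam : K) (hlam : lam ≠ 0) (φ : a1 →ₗ[K] K) : (K × a1) ≃ₗ[K] K × a1 :=
  upperSkewProd (.smulOfNeZero K K lam⁻¹ (inv_ne_zero hlam)) (.refl K a1) (lam⁻¹ • φ)

theorem cohomologousOddEquiv_mk (lam : K) (hlam : lam ≠ 0) (φ : a1 →ₗ[K] K) (μ : K) (v : a1) :
    cohomologousOddEquiv lam hlam φ (μ, v) = (lam⁻¹ * μ + lam⁻¹ * φ v, v) :=
  rfl

namespace DevExtOddFormulas

variable {S : SuperAlg K a0 a1} {No : OddNIS K a0 a1 S} {D D' : EvenDer K a0 a1 S}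
variable {T T' : SuperAlg K (a0 × K) (K × a1)}
variable {M : OddNIS K (a0 × K) (K × a1) T} {M' : OddNIS K (a0 × K) (K × a1) T'}

theorem cohomologousEvenEquiv_br0 [CharP K 2]
    (hT : DevExtOddFormulas K a0 a1 S No D T M) (hT' : DevExtOddFormulas K a0 a1 S No D' T' M')
    {lam : K} (hlam : lam ≠ 0) {t : a0} (hcoh : ∀ x, D.D0 x = lam • D'.D0 x + S.br0 t x)
    (p q : a0 × K) :
    cohomologousEvenEquiv lam hlam t (T.br0 p q) =
      T'.br0 (cohomologousEvenEquiv lam hlam t p) (cohomologousEvenEquiv lam hlam t q) := by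
  obtain ⟨br0_mk, -⟩ := hT
  obtain ⟨br0_mk', -⟩ := hT'
  obtain ⟨x, ν⟩ := p
  obtain ⟨y, ν'⟩ := q
  have br0_translate : S.br0 (x + ν • t) (y + ν' • t) =
      S.br0 x y + ν • S.br0 t y + ν' • S.br0 t x := by
    simp only [map_add, map_smul, LinearMap.add_apply, LinearMap.smul_apply, S.br0_self,
      S.br0_comm_s16 x t, smul_zero, add_zero]
  rw [br0_mk]
  simp only [cohomologousEvenEquiv_mk]
  rw [br0_mk', br0_translate]
  simp only [hcoh, map_add, map_smul, zero_smul, add_zero, mul_zero, Prod.mk.injEq, and_true]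
  have twice_eq_zero : (2 : K) • (lam * ν * ν') • D'.D0 t = 0 := by
    rw [CharTwo.two_eq_zero, zero_smul]
  linear_combination (norm := module) -twice_eq_zero

theorem cohomologousEvenEquiv_sq (hT : DevExtOddFormulas K a0 a1 S No D T M)
    (hT' : DevExtOddFormulas K a0 a1 S No D' T' M') {lam : K} (hlam : lam ≠ 0) (t : a0)
    (φ : a1 →ₗ[K] K) (f : K × a1) :
    cohomologousEvenEquiv lam hlam t (T.sq f) = T'.sq (cohomologousOddEquiv lam hlam φ f) := by
  obtain ⟨-, -, sq_mk, -⟩ := hT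
  obtain ⟨-, -, sq_mk', -⟩ := hT'
  obtain ⟨μ, v⟩ := f
  rw [sq_mk, cohomologousEvenEquiv_mk, cohomologousOddEquiv_mk, sq_mk', zero_smul, add_zero,
    mul_zero]

theorem Bo_cohomologousEquiv [CharP K 2] (hT : DevExtOddFormulas K a0 a1 S No D T M)
    (hT' : DevExtOddFormulas K a0 a1 S No D' T' M') {lam : K} (hlam : lam ≠ 0) (t : a0)
    (p : a0 × K) (f : K × a1) :
    M'.Bo (cohomologousEvenEquiv lam hlam t p) (cohomologousOddEquiv lam hlam (No.Bo t) f) =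
      M.Bo p f := by
  obtain ⟨-, -, -, Bo_mk⟩ := hT
  obtain ⟨-, -, -, Bo_mk'⟩ := hT'
  obtain ⟨x, ν⟩ := p
  obtain ⟨μ, v⟩ := f
  calc M'.Bo (cohomologousEvenEquiv lam hlam t (x, ν))
        (cohomologousOddEquiv lam hlam (No.Bo t) (μ, v))
      = No.Bo (x + ν • t) v + lam * ν * (lam⁻¹ * μ + lam⁻¹ * No.Bo t v) := by
        rw [cohomologousEvenEquiv_mk, cohomologousOddEquiv_mk, Bo_mk']
    _ = No.Bo x v + ν * μ + (ν * No.Bo t v + ν * No.Bo t v) := by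
        rw [map_add, map_smul, LinearMap.add_apply, LinearMap.smul_apply, smul_eq_mul]
        field_simp
        ring
    _ = M.Bo (x, ν) (μ, v) := by rw [CharTwo.add_self_eq_zero, add_zero, Bo_mk]

/-- The isometry `u ↦ u`, `e ↦ t + lam e`, `x ↦ lam⁻¹ x`, `v ↦ v + lam⁻¹ B_a(t, v) x` between the
`D_ev`-extensions by two derivations `D = lam D' + ad_t` of an algebra with odd form. -/
def cohomologousIsometry [CharP K 2]
    (hT : DevExtOddFormulas K a0 a1 S No D T M) (hT' : DevExtOddFormulas K a0 a1 S No D' T' M')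
    {lam : K} (hlam : lam ≠ 0) {t : a0} (hcoh : ∀ x, D.D0 x = lam • D'.D0 x + S.br0 t x) :
    OddIsometry K (a0 × K) (K × a1) (a0 × K) (K × a1) T M T' M' :=
  .ofMapBr0MapSq (cohomologousEvenEquiv lam hlam t) (cohomologousOddEquiv lam hlam (No.Bo t))
    (hT.cohomologousEvenEquiv_br0 hT' hlam hcoh) (hT.cohomologousEvenEquiv_sq hT' hlam t (No.Bo t))
    (hT.Bo_cohomologousEquiv hT' hlam t)

theorem cohomologousIsometry_e0_mk_zero [CharP K 2]
    (hT : DevExtOddFormulas K a0 a1 S No D T M) (hT' : DevExtOddFormulas K a0 a1 S No D' T' M')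
    {lam : K} (hlam : lam ≠ 0) {t : a0} (hcoh : ∀ x, D.D0 x = lam • D'.D0 x + S.br0 t x)
    (u : a0) : (hT.cohomologousIsometry hT' hlam hcoh).e0 (u, 0) = (u, 0) := by
  change cohomologousEvenEquiv lam hlam t (u, 0) = (u, 0)
  rw [cohomologousEvenEquiv_mk, zero_smul, add_zero, mul_zero]

end DevExtOddFormulas

end Cohomologous

theorem stmt16_general (K : Type) [Field K] [CharP K 2] (a0 a1 : Type)
    [AddCommGroup a0] [Module K a0] [AddCommGroup a1] [Module K a1]
    (S : SuperAlg K a0 a1) (No : OddNIS K a0 a1 S) (D D' : EvenDer K a0 a1 S)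
    (lam : K) (hlam : lam ≠ 0) (t : a0)
    (hcoh0 : ∀ x : a0, D.D0 x = lam • D'.D0 x + S.br0 t x)
    (T : SuperAlg K (a0 × K) (K × a1)) (M : OddNIS K (a0 × K) (K × a1) T)
    (hT : DevExtOddFormulas K a0 a1 S No D T M)
    (T' : SuperAlg K (a0 × K) (K × a1)) (M' : OddNIS K (a0 × K) (K × a1) T')
    (hT' : DevExtOddFormulas K a0 a1 S No D' T' M') :
    ∃ π : OddIsometry K (a0 × K) (K × a1) (a0 × K) (K × a1) T M T' M',
      ∀ u : a0, ∃ u' : a0, π.e0 (u, 0) = (u', 0) :=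
  ⟨hT.cohomologousIsometry hT' hlam hcoh0,
    fun u => ⟨u, hT.cohomologousIsometry_e0_mk_zero hT' hlam hcoh0 u⟩⟩

/-- Corollary 4.13 of the paper: two cohomologous even
derivations `D = λD' + ad_t` (with `λ ≠ 0`, `t ∈ a_0`) of a NIS-Lie
superalgebra `(a, B_a)` in characteristic 2 with `B_a` odd, each satisfying
`B_a(Du,v) + B_a(u,Dv) = 0`, define isometric `D_ev`-extensions (odd-form
type), via an adapted isometry. -/
theorem stmt16 (K : Type) [Field K] [CharP K 2] (a0 a1 : Type)
    [AddCommGroup a0] [Module K a0] [AddCommGroup a1] [Module K a1]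
    [FiniteDimensional K a0] [FiniteDimensional K a1]
    (S : SuperAlg K a0 a1) (No : OddNIS K a0 a1 S)
    (D D' : EvenDer K a0 a1 S)
    (hdata : DevDataOdd K a0 a1 S No D)
    (hdata' : DevDataOdd K a0 a1 S No D')
    (lam : K) (hlam : lam ≠ 0) (t : a0)
    (hcoh0 : ∀ x : a0, D.D0 x = lam • D'.D0 x + S.br0 t x)
    (hcoh1 : ∀ f : a1, D.D1 f = lam • D'.D1 f + S.br1 t f)
    (T : SuperAlg K (a0 × K) (K × a1)) (M : OddNIS K (a0 × K) (K × a1) T)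
    (hT : DevExtOddFormulas K a0 a1 S No D T M)
    (T' : SuperAlg K (a0 × K) (K × a1)) (M' : OddNIS K (a0 × K) (K × a1) T')
    (hT' : DevExtOddFormulas K a0 a1 S No D' T' M') :
    ∃ π : OddIsometry K (a0 × K) (K × a1) (a0 × K) (K × a1) T M T' M',
      ∀ u : a0, ∃ u' : a0, π.e0 (u, 0) = (u', 0) := by
  exact stmt16_general K a0 a1 S No D D' lam hlam t hcoh0 T M hT T' M' hT'

end Char2DoubleExt
end

section
/- Let K be a perfect field of characteristic 2 and let (g,B) be an irreducible finite-dimensional NIS-Lie superalgebra over K with B even. If dim z(g)_1 > dim z(g)_0, then there exists a nonzero x ∈ z(g)_1 with s_g(x) = 0 (so z(g)_1 ∩ C(g,B) ≠ {0}, where C(g,B) := {u ∈ g_1 : B(s_g(u),s_g(v)) = 0 for all v ∈ g_1}), and (g,B) is obtained as a D_od-extension of a NIS-Lie superalgebra of dimension dim(g) − 2. -/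
/-!
The squaring is additive on the odd center and takes values in the even center. It multiplies
scalars by their squares, so over a perfect field it is semilinear along a bijection of `K`; were it
injective, the odd center would be no larger than the even one. Hence some nonzero odd central `x`
squares to zero.

The form is alternating on the odd part, so `x` is completed to a hyperbolic pair `x, xs`, and the
odd part is the sum of the plane they span and its orthogonal complement `A`. Centrality makes every
`[y, f]` orthogonal to `x`, so brackets into the odd part leave `g0 ⊕ A` only along `x`, and
projecting this component away is harmless inside further brackets. What remains is a NIS-Lie
superalgebra on `g0 ⊕ A`, from which bracketing with `xs` and the element `s(xs)` rebuild `g`.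
-/

namespace Char2DoubleExt

theorem add_self_eq_zero_of_charTwo_s19 (R : Type*) {M : Type*} [Semiring R] [CharP R 2]
    [AddCommMonoid M] [Module R M] (m : M) : m + m = 0 := by
  rw [← two_smul R, CharTwo.two_eq_zero, zero_smul]

section HyperbolicPair

variable {R V : Type*} [CommRing R] [AddCommGroup V] [Module R V]
variable {B : V →ₗ[R] V →ₗ[R] R} {x y : V}

/-- The orthogonal complement of the plane spanned by `x` and `y`, used when these form a hyperbolic
pair, that is, when `B` is alternating and `B x y = 1`. -/
def hyperbolicCompl (B : V →ₗ[R] V →ₗ[R] R) (x y : V) : Submodule R V :=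
  (Submodule.span R {x, y}).orthogonalBilin B

theorem mem_hyperbolicCompl {v : V} : v ∈ hyperbolicCompl B x y ↔ B x v = 0 ∧ B y v = 0 := by
  refine ⟨fun hv => ⟨hv x (Submodule.subset_span (by simp)),
    hv y (Submodule.subset_span (by simp))⟩, ?_⟩
  rintro ⟨hxv, hyv⟩ u hu
  obtain ⟨a, b, rfl⟩ := Submodule.mem_span_pair.1 hu
  simp [hxv, hyv]

/-- The orthogonal projection onto the complement of the plane of a hyperbolic pair. -/
def hyperbolicProj (hB : B.IsAlt) (hxy : B x y = 1) : V →ₗ[R] hyperbolicCompl B x y :=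
  (LinearMap.id - (B.flip y).smulRight x - (B x).smulRight y).codRestrict _ fun v =>
    mem_hyperbolicCompl.2 ⟨by simp [hB.self_eq_zero, hxy],
      by simp [hB.self_eq_zero, ← hB.neg x y, ← hB.neg v y, hxy]⟩

theorem coe_hyperbolicProj (hB : B.IsAlt) (hxy : B x y = 1) (v : V) :
    (hyperbolicProj hB hxy v : V) = v - B v y • x - B x v • y :=
  rfl

theorem apply_hyperbolicProj_left (hB : B.IsAlt) (hxy : B x y = 1) (v : V)
    (a : hyperbolicCompl B x y) : B (hyperbolicProj hB hxy v) a = B v a := by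
  have ha := mem_hyperbolicCompl.1 a.2
  simp [coe_hyperbolicProj, ha.1, ha.2]

theorem apply_hyperbolicProj_right (hB : B.IsAlt) (hxy : B x y = 1)
    (a : hyperbolicCompl B x y) (v : V) : B a (hyperbolicProj hB hxy v) = B a v := by
  rw [← hB.neg, apply_hyperbolicProj_left, hB.neg]

theorem linearIndependent_of_hyperbolic (hB : B.IsAlt) (hxy : B x y = 1) :
    LinearIndependent R ![x, y] := by
  refine LinearIndependent.pair_iff.2 fun a b hab => ⟨?_, ?_⟩
  · simpa [hB.self_eq_zero, hxy] using congrArg (B · y) hab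
  · simpa [hB.self_eq_zero, hxy] using congrArg (B x) hab

theorem notMem_span_singleton_of_hyperbolic [Nontrivial R] (hB : B.IsAlt) (hxy : B x y = 1) :
    y ∉ Submodule.span R {x} := by
  rw [Submodule.mem_span_singleton]
  rintro ⟨a, rfl⟩
  simp [hB.self_eq_zero] at hxy

theorem isCompl_span_hyperbolicCompl (hB : B.IsAlt) (hxy : B x y = 1) :
    IsCompl (Submodule.span R {x, y}) (hyperbolicCompl B x y) := by
  constructor
  · rw [Submodule.disjoint_def]
    intro v hv hvA
    obtain ⟨a, b, rfl⟩ := Submodule.mem_span_pair.1 hv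
    obtain ⟨rfl, rfl⟩ : b = 0 ∧ a = 0 := by
      simpa [hB.self_eq_zero, ← hB.neg x y, hxy] using mem_hyperbolicCompl.1 hvA
    simp
  · refine codisjoint_iff_le_sup.2 fun v _ => Submodule.mem_sup.2
      ⟨_, Submodule.mem_span_pair.2 ⟨B v y, B x v, rfl⟩, _, (hyperbolicProj hB hxy v).2, ?_⟩
    rw [coe_hyperbolicProj]
    abel

theorem rank_hyperbolicCompl_add_two {K V : Type*} [Field K] [AddCommGroup V] [Module K V]
    {B : V →ₗ[K] V →ₗ[K] K} {x y : V} (hB : B.IsAlt) (hxy : B x y = 1) :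
    Module.rank K (hyperbolicCompl B x y) + 2 = Module.rank K V := by
  have hplane : Module.rank K (Submodule.span K {x, y}) = 2 := by
    rw [← Matrix.range_cons_cons_empty x y ![],
      rank_eq_card_basis (Module.Basis.span (linearIndependent_of_hyperbolic hB hxy))]
    simp
  have hcompl := isCompl_span_hyperbolicCompl hB hxy
  have hsum := Submodule.rank_sup_add_rank_inf_eq (Submodule.span K {x, y}) (hyperbolicCompl B x y)
  rwa [hcompl.sup_eq_top, hcompl.inf_eq_bot, rank_top, rank_bot, add_zero, hplane, add_comm 2,
    eq_comm] at hsum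

end HyperbolicPair

section Center

variable {K : Type} [Field K] {g0 g1 : Type}
variable [AddCommGroup g0] [Module K g0] [AddCommGroup g1] [Module K g1]
variable {S : SuperAlg K g0 g1}

theorem mem_zEven {y : g0} :
    y ∈ zEven K g0 g1 S ↔ (∀ z, S.br0 y z = 0) ∧ ∀ f, S.br1 y f = 0 := by
  simp [zEven]

theorem mem_zOdd {f : g1} :
    f ∈ zOdd K g0 g1 S ↔ (∀ y, S.br1 y f = 0) ∧ ∀ g, S.br11 f g = 0 := by
  simp [zOdd]

theorem SuperAlg.sq_zero (S : SuperAlg K g0 g1) : S.sq 0 = 0 := by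
  simpa using S.sq_smul 0 0

theorem SuperAlg.br11_self_s19 [CharP K 2] (S : SuperAlg K g0 g1) (f : g1) : S.br11 f f = 0 := by
  simpa [add_self_eq_zero_of_charTwo_s19 K, S.sq_zero] using (S.sq_add f f).symm

theorem sq_mem_zEven {f : g1} (hf : f ∈ zOdd K g0 g1 S) : S.sq f ∈ zEven K g0 g1 S := by
  obtain ⟨hbr1, hbr11⟩ := mem_zOdd.1 hf
  exact mem_zEven.2 ⟨fun y => by rw [S.sq_br0, hbr1, map_zero],
    fun g => by rw [S.sq_br1, hbr11, map_zero, LinearMap.zero_apply]⟩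

/-- The squaring restricted to the odd center, where it is additive because its polarization, the
bracket, vanishes. -/
def sqCenter (S : SuperAlg K g0 g1) : zOdd K g0 g1 S →+ zEven K g0 g1 S where
  toFun f := ⟨S.sq f, sq_mem_zEven f.2⟩
  map_zero' := Subtype.ext S.sq_zero
  map_add' f g := Subtype.ext <| by
    simpa [(mem_zOdd.1 f.2).2] using S.sq_add f g

theorem rank_zOdd_le_of_sqCenter_injective (hsq : Function.Surjective fun d : K => d * d)
    (hinj : Function.Injective (sqCenter S)) :
    Module.rank K (zOdd K g0 g1 S) ≤ Module.rank K (zEven K g0 g1 S) :=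
  rank_le_of_surjective_injective (fun d => d * d) (sqCenter S) hsq hinj
    fun c f => Subtype.ext (S.sq_smul c f)

theorem exists_mem_zOdd_ne_zero_sq_eq_zero (hsq : Function.Surjective fun d : K => d * d)
    (hrank : Module.rank K (zEven K g0 g1 S) < Module.rank K (zOdd K g0 g1 S)) :
    ∃ x ∈ zOdd K g0 g1 S, x ≠ 0 ∧ S.sq x = 0 := by
  have hninj : ¬ Function.Injective (sqCenter S) := fun hinj =>
    hrank.not_ge (rank_zOdd_le_of_sqCenter_injective hsq hinj)
  rw [injective_iff_map_eq_zero] at hninj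
  push Not at hninj
  obtain ⟨x, hx, hx0⟩ := hninj
  exact ⟨x, x.2, by simpa using hx0, congrArg Subtype.val hx⟩

end Center

namespace EvenNIS

variable {K : Type} [Field K] {g0 g1 : Type}
variable [AddCommGroup g0] [Module K g0] [AddCommGroup g1] [Module K g1]
variable {S : SuperAlg K g0 g1} (N : EvenNIS K g0 g1 S) {x xs : g1}

theorem isAlt_B1 : N.B1.IsAlt :=
  N.alt1

theorem exists_B1_eq_one (hx : x ≠ 0) : ∃ xs, N.B1 x xs = 1 := by
  obtain ⟨f, hf⟩ : ∃ f, N.B1 x f ≠ 0 := not_forall.1 (mt (N.nondeg1 x) hx)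
  exact ⟨(N.B1 x f)⁻¹ • f, by simp [hf]⟩

theorem B1_br1_eq_zero_of_mem_zOdd (hx : x ∈ zOdd K g0 g1 S) (y : g0) (f : g1) :
    N.B1 x (S.br1 y f) = 0 := by
  rw [← N.inv2, (mem_zOdd.1 hx).2, map_zero, LinearMap.zero_apply]

theorem B1_br1_self [CharP K 2] (y : g0) (f : g1) : N.B1 (S.br1 y f) f = 0 := by
  rw [N.inv1, S.br11_self_s19, map_zero]

variable (hxy : N.B1 x xs = 1)

theorem coe_hyperbolicProj_br1 (hx : x ∈ zOdd K g0 g1 S) (y : g0) (f : g1) :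
    (hyperbolicProj N.isAlt_B1 hxy (S.br1 y f) : g1) = S.br1 y f - N.B1 (S.br1 y f) xs • x := by
  rw [coe_hyperbolicProj, N.B1_br1_eq_zero_of_mem_zOdd hx, zero_smul, sub_zero]

theorem coe_hyperbolicProj_br1_self [CharP K 2] (hx : x ∈ zOdd K g0 g1 S) (y : g0) :
    (hyperbolicProj N.isAlt_B1 hxy (S.br1 y xs) : g1) = S.br1 y xs := by
  rw [N.coe_hyperbolicProj_br1 hxy hx, B1_br1_self, zero_smul, sub_zero]

theorem br1_hyperbolicProj_br1 (hx : x ∈ zOdd K g0 g1 S) (z y : g0) (f : g1) :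
    S.br1 z (hyperbolicProj N.isAlt_B1 hxy (S.br1 y f)) = S.br1 z (S.br1 y f) := by
  rw [N.coe_hyperbolicProj_br1 hxy hx, map_sub, map_smul, (mem_zOdd.1 hx).1, smul_zero, sub_zero]

theorem br11_hyperbolicProj_br1 (hx : x ∈ zOdd K g0 g1 S) (g : g1) (y : g0) (f : g1) :
    S.br11 g (hyperbolicProj N.isAlt_B1 hxy (S.br1 y f)) = S.br11 g (S.br1 y f) := by
  rw [N.coe_hyperbolicProj_br1 hxy hx, map_sub, map_smul, S.br11_comm g x, (mem_zOdd.1 hx).2,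
    smul_zero, sub_zero]

/-- The Lie superalgebra of which the given one is a `D_od`-extension, realized on the orthogonal
complement of the plane of `x` and `xs` rather than as the quotient `x^⊥ / Kx`. -/
def reducedAlg (hx : x ∈ zOdd K g0 g1 S) : SuperAlg K g0 (hyperbolicCompl N.B1 x xs) where
  br0 := S.br0
  br1 := (S.br1.compr₂ (hyperbolicProj N.isAlt_B1 hxy)).compl₂ (hyperbolicCompl N.B1 x xs).subtype
  br11 := S.br11.compl₁₂ (hyperbolicCompl N.B1 x xs).subtype
    (hyperbolicCompl N.B1 x xs).subtype
  sq f := S.sq f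
  sq_smul c f := S.sq_smul c f
  sq_add f g := S.sq_add f g
  br0_self := S.br0_self
  br11_comm f g := S.br11_comm f g
  jacobi0 := S.jacobi0
  act_br y z f := by simp [N.br1_hyperbolicProj_br1, hx, S.act_br]
  jacobi_mix y f g := by simp [N.br11_hyperbolicProj_br1, hx, S.jacobi_mix]
  sq_br0 f y := by simp [N.br11_hyperbolicProj_br1, hx, S.sq_br0]
  sq_br1 f g := by simp [S.sq_br1]

/-- The restriction of the form to the reduced Lie superalgebra. -/
def reducedNIS (hx : x ∈ zOdd K g0 g1 S) :
    EvenNIS K g0 (hyperbolicCompl N.B1 x xs) (N.reducedAlg hxy hx) where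
  B0 := N.B0
  B1 := N.B1.compl₁₂ (hyperbolicCompl N.B1 x xs).subtype
    (hyperbolicCompl N.B1 x xs).subtype
  symm0 := N.symm0
  symm1 f g := N.symm1 f g
  alt1 f := N.alt1 f
  nondeg0 := N.nondeg0
  nondeg1 f hf := Subtype.ext <| N.nondeg1 f fun g =>
    (apply_hyperbolicProj_right N.isAlt_B1 hxy f g).symm.trans
      (hf (hyperbolicProj N.isAlt_B1 hxy g))
  inv0 := N.inv0
  inv1 y f g := by simp [reducedAlg, apply_hyperbolicProj_left, N.inv1]
  inv2 f g y := by simp [reducedAlg, apply_hyperbolicProj_right, N.inv2]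

/-- Bracketing with `xs`, as an odd derivation of the reduced Lie superalgebra. -/
def reducedDer [CharP K 2] (hx : x ∈ zOdd K g0 g1 S) :
    OddDer K g0 (hyperbolicCompl N.B1 x xs) (N.reducedAlg hxy hx) where
  D0 := hyperbolicProj N.isAlt_B1 hxy ∘ₗ S.br1.flip xs
  D1 := S.br11 xs ∘ₗ (hyperbolicCompl N.B1 x xs).subtype
  der0 y z := by simp [reducedAlg, S.act_br, N.coe_hyperbolicProj_br1_self, hx]
  der1 y f := by
    have hjacobi : S.br11 xs (S.br1 y f) = S.br11 (S.br1 y xs) f + S.br0 y (S.br11 xs f) := by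
      rw [S.br11_comm (S.br1 y xs)]
      linear_combination (norm := abel)
        add_self_eq_zero_of_charTwo_s19 K (S.br11 xs (S.br1 y f)) - S.jacobi_mix y xs f
    simpa [reducedAlg, N.br11_hyperbolicProj_br1 hxy hx, N.coe_hyperbolicProj_br1_self hxy hx]
      using hjacobi
  der_sq f := by simp [reducedAlg, S.sq_br1, S.br11_comm xs]

theorem dodDataEven_reduced [CharP K 2] (hx : x ∈ zOdd K g0 g1 S) :
    DodDataEven K g0 (hyperbolicCompl N.B1 x xs) (N.reducedAlg hxy hx) (N.reducedNIS hxy hx)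
      (N.reducedDer hxy hx) (S.sq xs) := by
  refine ⟨fun y f => ?_, fun y => ?_, fun f => ?_, ?_⟩
  · simp [reducedNIS, reducedDer, apply_hyperbolicProj_left, N.inv1]
  · simp [reducedDer, reducedAlg, N.coe_hyperbolicProj_br1_self, hx, S.sq_br0]
  · simp [reducedDer, reducedAlg, S.sq_br1]
  · simp [reducedDer, S.sq_br1, S.br11_self_s19]

/-- The formulas of `DodExtEvenFormulas` for a Lie superalgebra whose odd part is an internal direct
sum `Kx ⊕ A ⊕ Kxs`, with `x` and `xs` in the roles of `x` and `x*`; the even parts coincide. -/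
def InternalDodExtFormulas (x xs : g1) {A : Submodule K g1} {T : SuperAlg K g0 A}
    (M : EvenNIS K g0 A T) (D : OddDer K g0 A T) (w : g0) : Prop :=
  (∀ y : g0, S.br1 y x = 0) ∧ (∀ f : g1, S.br11 x f = 0) ∧ S.sq x = 0 ∧
  (∀ y z : g0, S.br0 y z = T.br0 y z) ∧
  (∀ (y : g0) (f : A), S.br1 y ↑f = ↑(T.br1 y f) + M.B1 (D.D0 y) f • x) ∧
  (∀ y : g0, S.br1 y xs = ↑(D.D0 y)) ∧
  (∀ f g : A, S.br11 ↑f ↑g = T.br11 f g) ∧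
  (∀ f : A, S.br11 xs ↑f = D.D1 f) ∧
  (∀ f : A, S.sq ↑f = T.sq f) ∧
  S.sq xs = w ∧
  (∀ y z : g0, N.B0 y z = M.B0 y z) ∧
  (∀ f g : A, N.B1 ↑f ↑g = M.B1 f g) ∧
  N.B1 x x = 0 ∧ N.B1 x xs = 1 ∧ N.B1 xs xs = 0 ∧
  (∀ f : A, N.B1 x ↑f = 0) ∧ (∀ f : A, N.B1 xs ↑f = 0)

theorem br1_eq_reduced_br1_add [CharP K 2] (hx : x ∈ zOdd K g0 g1 S) (y : g0)
    (f : hyperbolicCompl N.B1 x xs) :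
    S.br1 y f = ((N.reducedAlg hxy hx).br1 y f : g1) +
      (N.reducedNIS hxy hx).B1 ((N.reducedDer hxy hx).D0 y) f • x := by
  have hcoeff : (N.reducedNIS hxy hx).B1 ((N.reducedDer hxy hx).D0 y) f =
      N.B1 (S.br1 y f) xs := by
    simp [reducedNIS, reducedDer, apply_hyperbolicProj_left, N.inv1, S.br11_comm xs]
  rw [hcoeff]
  exact eq_add_of_sub_eq (N.coe_hyperbolicProj_br1 hxy hx y f).symm

theorem internalDodExtFormulas_reduced [CharP K 2] (hx : x ∈ zOdd K g0 g1 S) (hsq : S.sq x = 0) :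
    N.InternalDodExtFormulas x xs (N.reducedNIS hxy hx) (N.reducedDer hxy hx) (S.sq xs) :=
  ⟨(mem_zOdd.1 hx).1, (mem_zOdd.1 hx).2, hsq, fun _ _ => rfl, N.br1_eq_reduced_br1_add hxy hx,
    fun y => (N.coe_hyperbolicProj_br1_self hxy hx y).symm, fun _ _ => rfl, fun _ => rfl,
    fun _ => rfl, rfl, fun _ _ => rfl, fun _ _ => rfl, N.alt1 x, hxy, N.alt1 xs,
    fun f => (mem_hyperbolicCompl.1 f.2).1, fun f => (mem_hyperbolicCompl.1 f.2).2⟩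

end EvenNIS

theorem stmt19_general (K : Type) [Field K] [CharP K 2] (g0 g1 : Type)
    [AddCommGroup g0] [Module K g0] [AddCommGroup g1] [Module K g1]
    (S : SuperAlg K g0 g1) (N : EvenNIS K g0 g1 S)
    (hperf : ∀ c : K, ∃ d : K, d * d = c)
    (hrank : Module.rank K (zEven K g0 g1 S) < Module.rank K (zOdd K g0 g1 S)) :
    ∃ x ∈ zOdd K g0 g1 S, x ≠ 0 ∧ S.sq x = 0 ∧
      ∃ (xs : g1) (A : Submodule K g1) (T : SuperAlg K g0 A) (M : EvenNIS K g0 A T)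
        (D : OddDer K g0 A T) (w : g0),
        DodDataEven K g0 A T M D w ∧ xs ∉ Submodule.span K {x} ∧
        IsCompl (Submodule.span K {x, xs}) A ∧
        Module.rank K A + 2 = Module.rank K g1 ∧ N.InternalDodExtFormulas x xs M D w := by
  obtain ⟨x, hx, hx0, hsq⟩ := exists_mem_zOdd_ne_zero_sq_eq_zero hperf hrank
  obtain ⟨xs, hxy⟩ := N.exists_B1_eq_one hx0
  exact ⟨x, hx, hx0, hsq, xs, _, N.reducedAlg hxy hx, N.reducedNIS hxy hx, N.reducedDer hxy hx,
    S.sq xs, N.dodDataEven_reduced hxy hx, notMem_span_singleton_of_hyperbolic N.isAlt_B1 hxy,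
    isCompl_span_hyperbolicCompl N.isAlt_B1 hxy, rank_hyperbolicCompl_add_two N.isAlt_B1 hxy,
    N.internalDodExtFormulas_reduced hxy hx hsq⟩

/-- Proposition 5.3 of the paper: let `K` be a perfect field
of characteristic 2 and `(g, B)` an irreducible finite-dimensional NIS-Lie
superalgebra over `K` with `B` even. If `dim z(g)_1 > dim z(g)_0`, then there
is a nonzero odd central `x` with `s_g(x) = 0` (in particular
`z(g)_1 ∩ C(g,B) ≠ {0}`), and `(g, B)` is obtained as a `D_od`-extension (even
form, odd `x`, `x*`) of a NIS-Lie superalgebra of dimension `dim g − 2`. -/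
theorem stmt19 (K : Type) [Field K] [CharP K 2] (g0 g1 : Type)
    [AddCommGroup g0] [Module K g0] [AddCommGroup g1] [Module K g1]
    [FiniteDimensional K g0] [FiniteDimensional K g1]
    (S : SuperAlg K g0 g1) (N : EvenNIS K g0 g1 S)
    (hperf : ∀ c : K, ∃ d : K, d * d = c)
    (hirr : EvenIrreducible K g0 g1 S N)
    (hdim : Module.finrank K ↥(zOdd K g0 g1 S) > Module.finrank K ↥(zEven K g0 g1 S)) :
    (∃ x : g1, x ≠ 0 ∧ x ∈ zOdd K g0 g1 S ∧ S.sq x = 0 ∧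
        (∀ v : g1, N.B0 (S.sq x) (S.sq v) = 0)) ∧
    (∃ (x xs : g1) (A : Submodule K g1) (T : SuperAlg K g0 ↥A)
      (M : EvenNIS K g0 ↥A T) (D : OddDer K g0 ↥A T) (w : g0),
      DodDataEven K g0 ↥A T M D w ∧
      x ≠ 0 ∧ xs ∉ Submodule.span K ({x} : Set g1) ∧
      Submodule.span K ({x, xs} : Set g1) ⊓ A = ⊥ ∧
      Submodule.span K ({x, xs} : Set g1) ⊔ A = ⊤ ∧
      Module.finrank K ↥A + 2 = Module.finrank K g1 ∧
      (∀ y : g0, S.br1 y x = 0) ∧ (∀ f : g1, S.br11 x f = 0) ∧ S.sq x = 0 ∧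
      (∀ y z : g0, S.br0 y z = T.br0 y z) ∧
      (∀ (y : g0) (f : A), S.br1 y ↑f = ↑(T.br1 y f) + M.B1 (D.D0 y) f • x) ∧
      (∀ y : g0, S.br1 y xs = ↑(D.D0 y)) ∧
      (∀ f g : A, S.br11 ↑f ↑g = T.br11 f g) ∧
      (∀ f : A, S.br11 xs ↑f = D.D1 f) ∧
      (∀ f : A, S.sq ↑f = T.sq f) ∧
      S.sq xs = w ∧
      (∀ y z : g0, N.B0 y z = M.B0 y z) ∧
      (∀ f g : A, N.B1 ↑f ↑g = M.B1 f g) ∧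
      N.B1 x x = 0 ∧ N.B1 x xs = 1 ∧ N.B1 xs xs = 0 ∧
      (∀ f : A, N.B1 x ↑f = 0) ∧ (∀ f : A, N.B1 xs ↑f = 0)) := by
  obtain ⟨x, hx, hx0, hsq, xs, A, T, M, D, w, hD, hxs, hA, hrank, hext⟩ :=
    stmt19_general K g0 g1 S N hperf (by simpa only [← Module.finrank_eq_rank, Nat.cast_lt])
  rw [← Module.finrank_eq_rank, ← Module.finrank_eq_rank] at hrank
  exact ⟨⟨x, hx0, hx, hsq, by simp [hsq]⟩, x, xs, A, T, M, D, w, hD, hx0, hxs, hA.inf_eq_bot,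
    hA.sup_eq_top, mod_cast hrank, hext⟩

end Char2DoubleExt
end
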